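/- Let V ⊆ V' be an immediate extension of valuation rings and K ⊆ K' the corresponding extension of fraction fields. If the field extension K'/K is algebraic, then V' is a filtered union of its V-subalgebras that are complete intersection V-algebras of finite type; that is, the set of such subalgebras is nonempty, directed under inclusion, and its union is all of V'. -/

import Mathlib

/-- An extension `V ⊆ V'` of valuation rings (given by an injective algebra structure)
is *immediate* if it is local, the induced map of residue fields is an isomorphism,
and the induced map of value groups is an isomorphism. -/
def IsImmediateExtension (V V' : Type*) [CommRing V] [IsLocalRing V]
    [CommRing V'] [IsLocalRing V'] [Algebra V V'] : Prop :=
  Function.Injective (algebraMap V V') ∧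
  (∀ a : V, algebraMap V V' a ∈ IsLocalRing.maximalIdeal V' ↔
    a ∈ IsLocalRing.maximalIdeal V) ∧
  (∀ x : V', ∃ a : V, x - algebraMap V V' a ∈ IsLocalRing.maximalIdeal V') ∧
  (∀ x : V', x ≠ 0 → ∃ a b : V, a ≠ 0 ∧ b ≠ 0 ∧
    Associated (algebraMap V V' a) (x * algebraMap V V' b))


/-- A commutative ring `S` is a *filtered union* of those of its `R`-subalgebras
satisfying the class (predicate) `C` if the collection of subalgebras satisfying `C`
is nonempty, directed under inclusion, and its union is all of `S`. -/
def Subalgebra.IsFilteredUnion {R S : Type*} [CommSemiring R] [CommSemiring S]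
    [Algebra R S] (C : Subalgebra R S → Prop) : Prop :=
  (∃ A, C A) ∧ DirectedOn (· ≤ ·) {A | C A} ∧ ∀ s : S, ∃ A, C A ∧ s ∈ A

/-- An `R`-algebra `A` is a *complete intersection `R`-algebra of finite type* if it is
isomorphic to `R[Y₁, …, Y_N]/(f₁, …, f_r)` for a regular sequence `f₁, …, f_r` of the
polynomial ring `R[Y₁, …, Y_N]`. -/
def Algebra.IsCompleteIntersectionOfFiniteType (R A : Type*) [CommRing R] [CommRing A]
    [Algebra R A] : Prop :=
  ∃ (N r : ℕ) (f : Fin r → MvPolynomial (Fin N) R),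
    RingTheory.Sequence.IsRegular (MvPolynomial (Fin N) R) (List.ofFn f) ∧
    Nonempty ((MvPolynomial (Fin N) R ⧸ Ideal.span (Set.range f)) ≃ₐ[R] A)

section PrefixIdeals

namespace MonicDeformation

open MvPolynomial

/-- The ideal generated by the coefficients from `I` and the first `j` members of `F`. -/
noncomputable def prefixIdeal {R σ : Type*} [CommRing R] {n : ℕ} (F : Fin n → MvPolynomial σ R)
    (j : ℕ) (I : Ideal R) : Ideal (MvPolynomial σ R) :=
  I.map C ⊔ Ideal.span (F '' {i | i.val < j})

section PrefixIdeal

variable {R σ : Type*} [CommRing R] {n : ℕ} {F : Fin n → MvPolynomial σ R}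

lemma prefixIdeal_mono (j : ℕ) {I J : Ideal R} (h : I ≤ J) :
    prefixIdeal F j I ≤ prefixIdeal F j J :=
  sup_le_sup_right (Ideal.map_mono h) _

lemma prefixIdeal_mono_left {j k : ℕ} (h : j ≤ k) (I : Ideal R) :
    prefixIdeal F j I ≤ prefixIdeal F k I :=
  sup_le_sup_left (Ideal.span_mono (Set.image_mono fun _ hi => lt_of_lt_of_le hi h)) _

lemma prefixIdeal_zero (I : Ideal R) : prefixIdeal F 0 I = I.map C := by
  simp [prefixIdeal]

lemma mem_prefixIdeal_self (j : Fin n) (I : Ideal R) : F j ∈ prefixIdeal F (j + 1) I :=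
  Ideal.mem_sup_right (Ideal.subset_span ⟨j, by simp, rfl⟩)

lemma prefixIdeal_succ (j : Fin n) (I : Ideal R) :
    prefixIdeal F (j + 1) I = prefixIdeal F j I ⊔ Ideal.span {F j} := by
  rw [prefixIdeal, prefixIdeal, sup_assoc, ← Ideal.span_union]
  congr 2
  rw [← Set.image_singleton, ← Set.image_union]
  congr 1
  ext i
  simp [Fin.ext_iff, le_iff_lt_or_eq, or_comm]

lemma C_mem_prefixIdeal (j : ℕ) {I : Ideal R} {a : R} (ha : a ∈ I) :
    C a ∈ prefixIdeal F j I :=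
  Ideal.mem_sup_left (Ideal.mem_map_of_mem _ ha)

lemma mem_prefixIdeal_sup_span {j : ℕ} {I : Ideal R} {c : R} {g : MvPolynomial σ R}
    (h : g ∈ prefixIdeal F j (I ⊔ Ideal.span {c})) :
    ∃ g', g - C c * g' ∈ prefixIdeal F j I := by
  rw [prefixIdeal, Ideal.map_sup, Ideal.map_span, Set.image_singleton, sup_right_comm] at h
  obtain ⟨w, hw, z, hz, rfl⟩ := Submodule.mem_sup.1 h
  obtain ⟨g', rfl⟩ := Ideal.mem_span_singleton.1 hz
  exact ⟨g', by rw [add_sub_cancel_right]; exact hw⟩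

lemma C_mul_mem_prefixIdeal {j : ℕ} {I J : Ideal R} {c : R} (hc : ∀ a ∈ J, a * c ∈ I)
    {g : MvPolynomial σ R} (h : g ∈ prefixIdeal F j J) : C c * g ∈ prefixIdeal F j I := by
  obtain ⟨w, hw, z, hz, rfl⟩ := Submodule.mem_sup.1 h
  rw [mul_add]
  refine Ideal.add_mem _ (Ideal.mem_sup_left ?_) (Ideal.mem_sup_right (Ideal.mul_mem_left _ _ hz))
  rw [mem_map_C_iff] at hw ⊢
  intro m
  rw [coeff_C_mul, mul_comm]
  exact hc _ (hw m)

lemma exists_socle_element [IsLocalRing R] {I : Ideal R} {N : ℕ}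
    (hN : IsLocalRing.maximalIdeal R ^ N ≤ I) {c : R} (hc : c ∉ I) :
    ∃ μ, μ * c ∉ I ∧ ∀ a ∈ IsLocalRing.maximalIdeal R, a * (μ * c) ∈ I := by
  classical
  have hex : ∃ k, ∀ a ∈ IsLocalRing.maximalIdeal R ^ k, a * c ∈ I :=
    ⟨N, fun a ha => Ideal.mul_mem_right _ _ (hN ha)⟩
  have h0 : Nat.find hex ≠ 0 := by
    intro h
    have := Nat.find_spec hex 1
    rw [h] at this
    exact hc (by simpa using this)
  obtain ⟨k, hk⟩ := Nat.exists_eq_succ_of_ne_zero h0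
  have hmin := Nat.find_min hex (m := k) (by omega)
  push Not at hmin
  obtain ⟨μ, hμ, hμc⟩ := hmin
  refine ⟨μ, hμc, fun a ha => ?_⟩
  rw [← mul_assoc]
  refine Nat.find_spec hex _ ?_
  rw [hk, pow_succ']
  exact Ideal.mul_mem_mul ha hμ

end PrefixIdeal

section Regular

variable {R : Type*} [CommRing R] {n : ℕ} {F : Fin n → MvPolynomial (Fin n) R}
  {f : Fin n → Polynomial R}

lemma mem_prefixIdeal_of_mul_mem {m : Ideal R} (hf : ∀ i, (f i).Monic)
    (hF : ∀ i, F i - Polynomial.aeval (X i) (f i) ∈ m.map C) (j : Fin n)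
    {g : MvPolynomial (Fin n) R} (h : g * F j ∈ prefixIdeal F j m) : g ∈ prefixIdeal F j m := by
  classical
  set I := prefixIdeal F j m with hI
  let q : MvPolynomial (Fin n) R →+* MvPolynomial (Fin n) R ⧸ I := Ideal.Quotient.mk I
  let x : Fin n → Polynomial (MvPolynomial (Fin n) R ⧸ I) :=
    fun i => if i = j then Polynomial.X else Polynomial.C (q (X i))
  let Θ : MvPolynomial (Fin n) R →+* Polynomial (MvPolynomial (Fin n) R ⧸ I) :=
    eval₂Hom ((Polynomial.C.comp q).comp C) x
  have hq : ∀ p ∈ I, q p = 0 := fun p hp => Ideal.Quotient.eq_zero_iff_mem.2 hp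
  have hmq : ∀ p ∈ m.map (C : R →+* MvPolynomial (Fin n) R), q p = 0 :=
    fun p hp => hq p (Ideal.mem_sup_left hp)
  have hmΘ : ∀ p ∈ m.map (C : R →+* MvPolynomial (Fin n) R), Θ p = 0 := by
    intro p hp
    have : m.map C ≤ RingHom.ker Θ := by
      rw [Ideal.map_le_iff_le_comap]
      intro a ha
      have := hmq _ (Ideal.mem_map_of_mem C ha)
      simp [Θ, RingHom.mem_ker, this]
    exact this hp
  have hΘf : ∀ i (p : Polynomial R),
      Θ (Polynomial.aeval (X i) p) = p.eval₂ ((Polynomial.C.comp q).comp C) (x i) := by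
    intro i p
    rw [Polynomial.aeval_def, Polynomial.hom_eval₂]
    congr 1
    · ext a; simp [Θ, algebraMap_eq]
    · simp [Θ]
  have hΘF : ∀ i, Θ (F i) = (f i).eval₂ ((Polynomial.C.comp q).comp C) (x i) := by
    intro i
    rw [← hΘf, ← sub_eq_zero, ← map_sub]
    exact hmΘ _ (hF i)
  have hker : I ≤ RingHom.ker Θ := by
    refine sup_le (fun p hp => hmΘ p hp) (Ideal.span_le.2 ?_)
    rintro _ ⟨i, hi, rfl⟩
    have hij : i ≠ j := fun h => by simp [h] at hi
    change Θ (F i) = 0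
    have h1 : q (Polynomial.aeval (X i) (f i)) = 0 := by
      have h2 := hmq _ (hF i)
      rwa [map_sub, hq (F i) (Ideal.mem_sup_right (Ideal.subset_span ⟨i, hi, rfl⟩)), zero_sub,
        neg_eq_zero] at h2
    rw [hΘF]
    simp only [x, if_neg hij]
    rw [RingHom.comp_assoc, ← Polynomial.hom_eval₂, ← Polynomial.hom_eval₂]
    rw [Polynomial.aeval_def, algebraMap_eq] at h1
    rw [h1, map_zero]
  have h0 : Θ g * Θ (F j) = 0 := by rw [← map_mul]; exact hker h
  have hmon : Θ (F j) = (f j).map (q.comp C) := by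
    rw [hΘF]
    simp only [x, if_pos]
    rfl
  rw [hmon] at h0
  have hg : Θ g = 0 := by
    rwa [((hf j).map (q.comp C)).mul_left_eq_zero_iff] at h0
  have hcomp : (Polynomial.evalRingHom (q (X j))).comp Θ = q := by
    apply MvPolynomial.ringHom_ext
    · intro a; simp [Θ]
    · intro i
      by_cases hij : i = j
      · subst hij; simp [Θ, x]
      · simp [Θ, x, hij]
  rw [← Ideal.Quotient.eq_zero_iff_mem]
  change q g = 0
  rw [← hcomp, RingHom.comp_apply, hg, map_zero]

variable [IsLocalRing R]

lemma mem_prefixIdeal_maximalIdeal_of_C_mul_mem {I : Ideal R} {c : R} (hcI : c ∉ I)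
    (hreg : ∀ (j : Fin n) (g : MvPolynomial (Fin n) R),
      g * F j ∈ prefixIdeal F j (I ⊔ Ideal.span {c}) →
      g ∈ prefixIdeal F j (I ⊔ Ideal.span {c})) (j : ℕ) (hj : j ≤ n) :
    ∀ g : MvPolynomial (Fin n) R, C c * g ∈ prefixIdeal F j I →
      g ∈ prefixIdeal F j (IsLocalRing.maximalIdeal R) := by
  induction j with
  | zero =>
    intro g hg
    rw [prefixIdeal_zero, mem_map_C_iff] at *
    intro d
    rw [IsLocalRing.mem_maximalIdeal, mem_nonunits_iff]
    intro hu
    have := hg d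
    rw [coeff_C_mul] at this
    exact hcI ((Ideal.mul_unit_mem_iff_mem I hu).1 this)
  | succ j ih =>
    intro g hg
    have ih := ih (by omega)
    rw [prefixIdeal_succ ⟨j, hj⟩] at hg
    obtain ⟨u, hu, w, hw, huw⟩ := Submodule.mem_sup.1 hg
    obtain ⟨h, rfl⟩ := Ideal.mem_span_singleton.1 hw
    have h1 : h * F ⟨j, hj⟩ ∈ prefixIdeal F j (I ⊔ Ideal.span {c}) := by
      have : h * F ⟨j, hj⟩ = C c * g - u := by rw [← huw]; ring
      rw [this]
      refine Ideal.sub_mem _ (Ideal.mul_mem_right _ _ (C_mem_prefixIdeal _ ?_))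
        (prefixIdeal_mono _ le_sup_left hu)
      exact Ideal.mem_sup_right (Ideal.mem_span_singleton_self c)
    obtain ⟨h', hh'⟩ := mem_prefixIdeal_sup_span (hreg ⟨j, hj⟩ h h1)
    have h2 : C c * (g - h' * F ⟨j, hj⟩) ∈ prefixIdeal F j I := by
      have : C c * (g - h' * F ⟨j, hj⟩) = u + (h - C c * h') * F ⟨j, hj⟩ := by
        rw [mul_sub, ← huw]; ring
      rw [this]
      exact Ideal.add_mem _ hu (Ideal.mul_mem_right _ _ hh')
    have h3 := prefixIdeal_mono_left (Nat.le_succ j) _ (ih _ h2)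
    have h4 := Ideal.mul_mem_left _ h'
      (mem_prefixIdeal_self (F := F) ⟨j, hj⟩ (IsLocalRing.maximalIdeal R))
    simpa using Ideal.add_mem _ h3 h4

variable (hf : ∀ i, (f i).Monic)
  (hF : ∀ i, F i - Polynomial.aeval (X i) (f i) ∈ (IsLocalRing.maximalIdeal R).map C)
include hf hF

lemma mem_prefixIdeal_of_mul_mem_of_pow_le [IsNoetherianRing R] {N : ℕ} (I : Ideal R)
    (hN : IsLocalRing.maximalIdeal R ^ N ≤ I) (j : Fin n) (g : MvPolynomial (Fin n) R)
    (h : g * F j ∈ prefixIdeal F j I) : g ∈ prefixIdeal F j I := by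
  induction I using WellFoundedGT.induction generalizing j g with
  | ind I ih =>
    by_cases htop : I = ⊤
    · subst htop
      rw [prefixIdeal, Ideal.map_top]
      simp
    obtain ⟨μ, hμ, hmμ⟩ := exists_socle_element hN ((Ideal.ne_top_iff_one I).1 htop)
    rw [mul_one] at hμ hmμ
    have hlt : I < I ⊔ Ideal.span {μ} := by
      refine lt_of_le_of_ne le_sup_left fun heq => hμ ?_
      rw [heq]
      exact Ideal.mem_sup_right (Ideal.mem_span_singleton_self μ)
    have hreg := ih _ hlt (hN.trans hlt.le)
    obtain ⟨g', hg'⟩ := mem_prefixIdeal_sup_span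
      (hreg j g (prefixIdeal_mono _ le_sup_left h))
    have h1 : C μ * (g' * F j) ∈ prefixIdeal F j I := by
      have : C μ * (g' * F j) = g * F j - (g - C μ * g') * F j := by ring
      rw [this]
      exact Ideal.sub_mem _ h (Ideal.mul_mem_right _ _ hg')
    have h2 := mem_prefixIdeal_maximalIdeal_of_C_mul_mem hμ hreg j j.2.le _ h1
    have h3 := C_mul_mem_prefixIdeal hmμ (mem_prefixIdeal_of_mul_mem hf hF j h2)
    simpa using Ideal.add_mem _ hg' h3

lemma mem_prefixIdeal_of_C_mul_mem_of_isNoetherianRing [IsNoetherianRing R] {c : R} (hc : c ≠ 0)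
    (j : ℕ) (hj : j ≤ n) {g : MvPolynomial (Fin n) R}
    (h : C c * g ∈ Ideal.span (F '' {i | i.val < j})) :
    g ∈ prefixIdeal F j (IsLocalRing.maximalIdeal R) := by
  obtain ⟨N, hN⟩ : ∃ N, c ∉ IsLocalRing.maximalIdeal R ^ N := by
    by_contra! hall
    have := Ideal.iInf_pow_eq_bot_of_isLocalRing (IsLocalRing.maximalIdeal R)
      (IsLocalRing.maximalIdeal.isMaximal R).ne_top
    exact hc ((Submodule.mem_bot R).1 (this ▸ (Submodule.mem_iInf _).2 hall))
  exact mem_prefixIdeal_maximalIdeal_of_C_mul_mem hN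
    (fun j g => mem_prefixIdeal_of_mul_mem_of_pow_le hf hF _ le_sup_left j g) j hj g
    (Ideal.mem_sup_right h)

end Regular

end MonicDeformation

end PrefixIdeals

section Reduction

namespace MonicDeformation

open MvPolynomial

lemma map_mem_prefixIdeal {R S σ : Type*} [CommRing R] [CommRing S] {n : ℕ} (φ : R →+* S)
    {F : Fin n → MvPolynomial σ R} {j : ℕ} {I : Ideal R} {J : Ideal S} (hIJ : I.map φ ≤ J)
    {g : MvPolynomial σ R} (hg : g ∈ prefixIdeal F j I) :
    map φ g ∈ prefixIdeal (fun i => map φ (F i)) j J := by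
  have : prefixIdeal F j I ≤ (prefixIdeal (fun i => map φ (F i)) j J).comap (map φ) := by
    refine sup_le (Ideal.map_le_iff_le_comap.2 fun a ha => ?_) (Ideal.span_le.2 ?_)
    · rw [Ideal.mem_comap, Ideal.mem_comap, map_C]
      exact C_mem_prefixIdeal _ (hIJ (Ideal.mem_map_of_mem _ ha))
    · rintro _ ⟨i, hi, rfl⟩
      exact Ideal.mem_sup_right (Ideal.subset_span ⟨i, hi, rfl⟩)
  exact this hg

lemma map_aeval_X {R S σ : Type*} [CommRing R] [CommRing S] (φ : R →+* S) (i : σ)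
    (p : Polynomial R) :
    map φ (Polynomial.aeval (X i) p) = Polynomial.aeval (X i) (p.map φ) := by
  rw [Polynomial.aeval_def, Polynomial.hom_eval₂, Polynomial.aeval_def, Polynomial.eval₂_map]
  congr 1
  · ext a; simp [algebraMap_eq]
  · simp

lemma exists_map_eq_of_coeffs_subset {R σ : Type*} [CommRing R] {A : Subalgebra ℤ R}
    {p : MvPolynomial σ R} (hp : (p.coeffs : Set R) ⊆ A) :
    ∃ q : MvPolynomial σ A, map (algebraMap A R) q = p :=
  mem_range_map_iff_coeffs_subset.2 fun x hx => ⟨⟨x, hp hx⟩, rfl⟩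

variable {R : Type*} [CommRing R] [IsLocalRing R] {n : ℕ}
  {F : Fin n → MvPolynomial (Fin n) R} {f : Fin n → Polynomial R}

lemma mem_prefixIdeal_of_C_mul_mem (hf : ∀ i, (f i).Monic)
    (hF : ∀ i, F i - Polynomial.aeval (X i) (f i) ∈ (IsLocalRing.maximalIdeal R).map C)
    {c : R} (hc : c ≠ 0) (j : ℕ) (hj : j ≤ n) {g : MvPolynomial (Fin n) R}
    (h : C c * g ∈ Ideal.span (F '' {i | i.val < j})) :
    g ∈ prefixIdeal F j (IsLocalRing.maximalIdeal R) := by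
  classical
  obtain ⟨t, htj, e, he⟩ := (Submodule.mem_span_image_iff_exists_fun _).1 h
  let S : Finset R := {c} ∪ g.coeffs ∪ (Finset.univ.biUnion fun i => (F i).coeffs) ∪
    (Finset.univ.biUnion fun i => (f i).coeffs) ∪ (Finset.univ.biUnion fun i => (e i).coeffs)
  let A : Subalgebra ℤ R := Algebra.adjoin ℤ (S : Set R)
  have hSA : (S : Set R) ⊆ A := Algebra.subset_adjoin
  have hAnoeth : IsNoetherianRing A := by
    have : Algebra.FiniteType ℤ A :=
      (Subalgebra.fg_iff_finiteType A).1 (Subalgebra.fg_adjoin_finset S)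
    exact Algebra.FiniteType.isNoetherianRing ℤ A
  have hinj : Function.Injective (algebraMap A R) := Subtype.val_injective
  obtain ⟨g₀, hg₀⟩ := exists_map_eq_of_coeffs_subset (A := A) (p := g)
    (fun x hx => hSA (by simp only [S, Finset.coe_union, Set.mem_union]; tauto))
  have hF₀ : ∀ i, ∃ q, map (algebraMap A R) q = F i := fun i =>
    exists_map_eq_of_coeffs_subset (fun x hx => hSA (by
      have : x ∈ Finset.univ.biUnion fun i => (F i).coeffs :=
        Finset.mem_biUnion.2 ⟨i, Finset.mem_univ _, hx⟩
      simp only [S, Finset.coe_union, Set.mem_union, Finset.mem_coe]; tauto))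
  have he₀ : ∀ i, ∃ q, map (algebraMap A R) q = e i := fun i =>
    exists_map_eq_of_coeffs_subset (fun x hx => hSA (by
      have : x ∈ Finset.univ.biUnion fun i => (e i).coeffs :=
        Finset.mem_biUnion.2 ⟨i, Finset.mem_univ _, hx⟩
      simp only [S, Finset.coe_union, Set.mem_union, Finset.mem_coe]; tauto))
  have hf₀ : ∀ i, ∃ q, Polynomial.map (algebraMap A R) q = f i := fun i => by
    rw [← Polynomial.mem_lifts, Polynomial.lifts_iff_coeffs_subset_range]
    intro x hx
    have : x ∈ Finset.univ.biUnion fun i => (f i).coeffs :=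
        Finset.mem_biUnion.2 ⟨i, Finset.mem_univ _, hx⟩
    exact ⟨⟨x, hSA (by
      simp only [S, Finset.coe_union, Set.mem_union, Finset.mem_coe]; tauto)⟩, rfl⟩
  choose F₀ hF₀ using hF₀
  choose e₀ he₀ using he₀
  choose f₀ hf₀ using hf₀
  let c₀ : A := ⟨c, hSA (by simp [S])⟩
  let P : Ideal A := (IsLocalRing.maximalIdeal R).comap (algebraMap A R)
  have hP : P.IsPrime := Ideal.IsPrime.comap _
  let L := Localization.AtPrime P
  have hunit : ∀ y : P.primeCompl, IsUnit (algebraMap A R y) := fun y => by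
    by_contra hy
    exact y.2 hy
  let φ : L →+* R := IsLocalization.lift hunit
  have hφ : φ.comp (algebraMap A L) = algebraMap A R := IsLocalization.lift_comp hunit
  have hφm : (IsLocalRing.maximalIdeal L).map φ ≤ IsLocalRing.maximalIdeal R := by
    rw [← Localization.AtPrime.map_eq_maximalIdeal, Ideal.map_map, hφ]
    exact Ideal.map_comap_le
  have hmapmap : ∀ p : MvPolynomial (Fin n) A,
      map φ (map (algebraMap A L) p) = map (algebraMap A R) p := fun p => by
    rw [map_map, hφ]
  have key := mem_prefixIdeal_of_C_mul_mem_of_isNoetherianRing (R := L)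
    (F := fun i => map (algebraMap A L) (F₀ i)) (f := fun i => (f₀ i).map (algebraMap A L))
    (fun i => ((hinj.monic_map_iff).2 (by rw [hf₀]; exact hf i)).map _) (fun i => ?_)
    (c := algebraMap A L c₀) ?_ j hj (g := map (algebraMap A L) g₀) ?_
  · have h1 := map_mem_prefixIdeal φ hφm key
    simpa only [hmapmap, hg₀, hF₀] using h1
  · rw [← map_aeval_X, ← map_sub, mem_map_C_iff]
    intro d
    rw [coeff_map, IsLocalization.AtPrime.to_map_mem_maximal_iff L P]
    have h1 := mem_map_C_iff.1 (hF i) d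
    rw [← hF₀, ← hf₀, ← map_aeval_X, ← map_sub, coeff_map] at h1
    exact h1
  · intro h0
    have h1 := congrArg φ h0
    rw [← RingHom.comp_apply, hφ, map_zero] at h1
    exact hc h1
  · have h1 : C c₀ * g₀ = ∑ i, e₀ i * F₀ i := by
      apply map_injective (algebraMap A R) hinj
      simp only [map_mul, map_C, map_sum, hg₀, he₀, hF₀]
      exact he.symm
    rw [← map_C, ← map_mul, h1, map_sum]
    refine Ideal.sum_mem _ fun i _ => ?_
    rw [map_mul]
    exact Ideal.mul_mem_left _ _ (Ideal.subset_span ⟨i, htj i.2, rfl⟩)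

end MonicDeformation

end Reduction

section Saturation

namespace MvPolynomial

section Homogenization

variable (σ R : Type*) [CommRing R]

/-- The homogenization map `R[σ, T] → R[σ][T]`, sending `X i` to `X i * T`. -/
noncomputable def scaleHom : MvPolynomial (Option σ) R →ₐ[R] Polynomial (MvPolynomial σ R) :=
  aeval fun i => Polynomial.C (i.elim 1 X) * Polynomial.X

variable {σ R}

lemma scaleHom_monomial (s : Option σ →₀ ℕ) (a : R) :
    ∃ t, scaleHom σ R (monomial s a) = Polynomial.monomial s.degree t := by
  refine ⟨C a * s.prod fun i k => (i.elim 1 X) ^ k, ?_⟩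
  rw [scaleHom, aeval_monomial, ← Polynomial.C_mul_X_pow_eq_monomial]
  simp only [mul_pow]
  rw [Finsupp.prod_mul, Finsupp.degree_apply, map_mul, mul_assoc]
  congr 2
  · simp [Finsupp.prod, map_prod, map_pow]
  · simp [Finsupp.prod, Finset.prod_pow_eq_pow_sum]

lemma scaleHom_homogeneousComponent (d : ℕ) (p : MvPolynomial (Option σ) R) :
    scaleHom σ R (homogeneousComponent d p) =
      Polynomial.monomial d ((scaleHom σ R p).coeff d) := by
  induction p using MvPolynomial.induction_on' with
  | monomial s a =>
    obtain ⟨t, ht⟩ := scaleHom_monomial s a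
    rw [homogeneousComponent_of_mem (n := s.degree)
      ((mem_homogeneousSubmodule _ _).2 (isHomogeneous_monomial a rfl))]
    split_ifs with h
    · subst h; simp [ht]
    · simp [ht, Polynomial.coeff_monomial, Ne.symm h]
  | add p q hp hq => simp [hp, hq]

lemma eval_one_scaleHom (p : MvPolynomial (Option σ) R) :
    Polynomial.eval 1 (scaleHom σ R p) = aeval (fun i : Option σ => i.elim 1 X) p := by
  have : ((Polynomial.evalRingHom (1 : MvPolynomial σ R)).comp (scaleHom σ R).toRingHom) =
      (aeval (R := R) (fun i : Option σ => i.elim (1 : MvPolynomial σ R) X)).toRingHom := by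
    apply MvPolynomial.ringHom_ext
    · intro r; simp [scaleHom, algebraMap_eq]
    · intro i; simp [scaleHom]
  exact congrArg (fun f => f p) this

lemma exists_scaleHom_eq (p : MvPolynomial σ R) :
    ∃ P N, scaleHom σ R P = Polynomial.C p * Polynomial.X ^ N := by
  induction p using MvPolynomial.induction_on with
  | C a => exact ⟨C a, 0, by simp [scaleHom, algebraMap_eq]⟩
  | add p q hp hq =>
    obtain ⟨P, N, hP⟩ := hp
    obtain ⟨Q, M, hQ⟩ := hq
    refine ⟨P * X none ^ M + Q * X none ^ N, N + M, ?_⟩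
    have : scaleHom σ R (X none) = Polynomial.X := by simp [scaleHom]
    simp only [map_add, map_mul, map_pow, this, hP, hQ]
    ring
  | mul_X p i hp =>
    obtain ⟨P, N, hP⟩ := hp
    refine ⟨P * X (some i), N + 1, ?_⟩
    have : scaleHom σ R (X (some i)) = Polynomial.C (X i) * Polynomial.X := by simp [scaleHom]
    simp only [map_mul, this, hP]
    ring

end Homogenization

section Saturated

variable {V σ : Type*} [CommRing V] [IsDomain V] [ValuationRing V]

lemma exists_eq_C_mul_of_mem_map_C {I : Ideal V} {r : MvPolynomial σ V} (hr : r ∈ I.map C) :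
    ∃ a ∈ I, ∃ r', r = C a * r' := by
  rw [mem_map_C_iff] at hr
  obtain ⟨a, ha⟩ := (IsBezout.isPrincipal_of_FG (Ideal.span (r.coeffs : Set V))
    ⟨r.coeffs, rfl⟩).principal
  refine ⟨a, ?_, ?_⟩
  · have h1 : a ∈ Ideal.span (r.coeffs : Set V) := ha ▸ Submodule.mem_span_singleton_self a
    refine Ideal.span_le.2 ?_ h1
    intro x hx
    obtain ⟨d, _, rfl⟩ := mem_coeffs_iff.1 hx
    exact hr d
  · have : C a ∣ r := by
      rw [C_dvd_iff_dvd_coeff]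
      intro d
      by_cases h0 : coeff d r = 0
      · simp [h0]
      · have : coeff d r ∈ Ideal.span (r.coeffs : Set V) :=
          Ideal.subset_span (mem_coeffs_iff.2 ⟨d, by simpa using h0, rfl⟩)
        rw [ha] at this
        exact Ideal.mem_span_singleton.1 this
    exact this

variable [Finite σ]

lemma fg_inf_homogeneousSubmodule (J : Ideal (MvPolynomial σ V))
    (hJ : ∀ c : V, c ≠ 0 → ∀ p, C c * p ∈ J → p ∈ J) (d : ℕ) :
    (J.restrictScalars V ⊓ homogeneousSubmodule σ V d).FG := by
  let M := homogeneousSubmodule σ V d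
  let N : Submodule V M := (J.restrictScalars V).comap M.subtype
  have hM : Module.Finite V M := Module.Finite.iff_fg.2 (homogeneousSubmodule_fg σ V d)
  have hflat : Module.Flat V (M ⧸ N) := by
    rw [Module.Flat.flat_iff_torsion_eq_bot_of_isBezout, eq_bot_iff]
    intro x hx
    obtain ⟨a, ha⟩ := (Submodule.mem_torsion_iff x).1 hx
    obtain ⟨p, rfl⟩ := Submodule.Quotient.mk_surjective N x
    rw [Submodule.mem_bot, Submodule.Quotient.mk_eq_zero]
    rw [Submonoid.smul_def, ← Submodule.Quotient.mk_smul, Submodule.Quotient.mk_eq_zero] at ha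
    refine hJ a (nonZeroDivisors.coe_ne_zero a) _ ?_
    rw [← smul_eq_C_mul]
    exact ha
  have hfree : Module.Free V (M ⧸ N) := Module.free_of_flat_of_isLocalRing
  have hfp : Module.FinitePresentation V (M ⧸ N) :=
    Module.finitePresentation_of_projective V (M ⧸ N)
  have hN : N.FG := by
    have := Module.FinitePresentation.fg_ker N.mkQ N.mkQ_surjective
    rwa [Submodule.ker_mkQ] at this
  have := hN.map M.subtype
  rwa [Submodule.map_comap_subtype, inf_comm] at this

attribute [local instance] MvPolynomial.gradedAlgebra

lemma fg_of_saturated_of_homogeneous (J : Ideal (MvPolynomial σ V))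
    (hJ : ∀ c : V, c ≠ 0 → ∀ p, C c * p ∈ J → p ∈ J)
    (hhom : ∀ p ∈ J, ∀ d, homogeneousComponent d p ∈ J) : J.FG := by
  classical
  let π : MvPolynomial σ V →+* MvPolynomial σ (IsLocalRing.ResidueField V) :=
    map (IsLocalRing.residue V)
  have hπ : Function.Surjective π := map_surjective _ IsLocalRing.residue_surjective
  obtain ⟨s, hsJ, hs⟩ : ∃ s : Finset (MvPolynomial σ V), (s : Set (MvPolynomial σ V)) ⊆ J ∧
      J.map π = (Ideal.span (s : Set _)).map π := by
    have h1 : (Ideal.span (π '' J)).FG := IsNoetherian.noetherian _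
    obtain ⟨s', hs', hs⟩ := (Submodule.fg_span_iff_fg_span_finset_subset _).1 h1
    obtain ⟨s, hsJ, rfl⟩ := Finset.subset_set_image_iff.1 hs'
    refine ⟨s, hsJ, ?_⟩
    rw [Ideal.map_span]
    rw [Finset.coe_image] at hs
    exact hs
  let S : Finset (MvPolynomial σ V) :=
    s.biUnion fun p => (Finset.range (p.totalDegree + 1)).image fun d => homogeneousComponent d p
  refine ⟨S, le_antisymm (Ideal.span_le.2 ?_) ?_⟩
  · intro q hq
    simp only [S, Finset.coe_biUnion, Finset.coe_image, Set.mem_iUnion, Set.mem_image] at hq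
    obtain ⟨p, hp, d, _, rfl⟩ := hq
    exact hhom p (hsJ hp) d
  set J₁ := Ideal.span (S : Set (MvPolynomial σ V)) with hJ₁
  have hJ₁hom : J₁.IsHomogeneous (homogeneousSubmodule σ V) := by
    refine Ideal.homogeneous_span _ _ ?_
    intro q hq
    simp only [S, Finset.coe_biUnion, Finset.coe_image, Set.mem_iUnion, Set.mem_image] at hq
    obtain ⟨p, hp, d, _, rfl⟩ := hq
    exact ⟨d, homogeneousComponent_mem d p⟩
  have hsJ₁ : Ideal.span (s : Set _) ≤ J₁ := by
    refine Ideal.span_le.2 fun p hp => ?_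
    rw [← sum_homogeneousComponent p]
    refine Ideal.sum_mem _ fun d hd => Ideal.subset_span ?_
    simp only [S, Finset.coe_biUnion, Finset.coe_image, Set.mem_iUnion, Set.mem_image]
    exact ⟨p, hp, d, hd, rfl⟩
  have key : ∀ d, J.restrictScalars V ⊓ homogeneousSubmodule σ V d ≤ J₁.restrictScalars V := by
    intro d
    refine Submodule.le_of_le_smul_of_le_jacobson_bot (fg_inf_homogeneousSubmodule J hJ d)
      (IsLocalRing.jacobson_eq_maximalIdeal ⊥ bot_ne_top).ge ?_
    rintro p ⟨hpJ, hpd⟩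
    have h1 : π p ∈ (Ideal.span (s : Set _)).map π := hs ▸ Ideal.mem_map_of_mem π hpJ
    obtain ⟨q, hq, hqp⟩ := (Ideal.mem_map_iff_of_surjective π hπ).1 h1
    have hqJ : q ∈ J := Ideal.span_le.2 hsJ hq
    have hr : p - q ∈ (IsLocalRing.maximalIdeal V).map C := by
      rw [← IsLocalRing.ker_residue, ← ker_map, RingHom.mem_ker, map_sub, sub_eq_zero]
      exact hqp.symm
    have hrd : homogeneousComponent d (p - q) ∈ (IsLocalRing.maximalIdeal V).map C := by
      rw [mem_map_C_iff] at hr ⊢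
      intro e
      rw [coeff_homogeneousComponent]
      split_ifs
      · exact hr e
      · exact zero_mem _
    obtain ⟨a, ha, r, hr'⟩ := exists_eq_C_mul_of_mem_map_C hrd
    have hr'' : homogeneousComponent d (p - q) = a • homogeneousComponent d r := by
      have h2 := congrArg (homogeneousComponent d) hr'
      rw [homogeneousComponent_C_mul, homogeneousComponent_of_mem (homogeneousComponent_mem d _),
        if_pos rfl] at h2
      rw [h2, smul_eq_C_mul]
    have hpd' : p = homogeneousComponent d q + a • homogeneousComponent d r := by
      rw [← hr'', map_sub, homogeneousComponent_of_mem hpd, if_pos rfl]; ring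
    rw [hpd']
    refine Submodule.add_mem_sup ?_ ?_
    · exact homogeneousComponent_mem_of_mem hJ₁hom (hsJ₁ hq) d
    · by_cases ha0 : a = 0
      · rw [ha0, zero_smul]; exact zero_mem _
      · refine Submodule.smul_mem_smul ha ⟨?_, homogeneousComponent_mem d _⟩
        refine hJ a ha0 _ ?_
        rw [← smul_eq_C_mul, ← hr'']
        exact hhom _ (Ideal.sub_mem _ hpJ hqJ) d
  intro p hp
  rw [← sum_homogeneousComponent p]
  exact Ideal.sum_mem _ fun d _ => key d ⟨hhom p hp d, homogeneousComponent_mem d p⟩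

theorem fg_of_saturated (J : Ideal (MvPolynomial σ V))
    (hJ : ∀ c : V, c ≠ 0 → ∀ p, C c * p ∈ J → p ∈ J) : J.FG := by
  let H : Ideal (MvPolynomial (Option σ) V) :=
    (J.map (Polynomial.C : _ →+* Polynomial (MvPolynomial σ V))).comap (scaleHom σ V)
  have hmem : ∀ p, p ∈ H ↔ ∀ k, (scaleHom σ V p).coeff k ∈ J := fun p => Ideal.mem_map_C_iff
  have hH : H.FG := by
    refine fg_of_saturated_of_homogeneous H ?_ ?_
    · intro c hc p hp
      rw [hmem] at hp ⊢
      intro k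
      refine hJ c hc _ ?_
      have := hp k
      rwa [← smul_eq_C_mul, map_smul, Polynomial.coeff_smul, smul_eq_C_mul] at this
    · intro p hp d
      rw [hmem] at hp ⊢
      intro k
      rw [scaleHom_homogeneousComponent, Polynomial.coeff_monomial]
      split_ifs
      · exact hp d
      · exact zero_mem _
  let δ : MvPolynomial (Option σ) V →+* MvPolynomial σ V :=
    (aeval (R := V) fun i : Option σ => i.elim (1 : MvPolynomial σ V) X).toRingHom
  have hδ : H.map δ = J := by
    refine le_antisymm (Ideal.map_le_iff_le_comap.2 fun p hp => ?_) fun p hp => ?_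
    · change aeval _ p ∈ J
      rw [← eval_one_scaleHom, Polynomial.eval_eq_sum]
      refine Ideal.sum_mem _ fun k _ => Ideal.mul_mem_right _ _ ((hmem p).1 hp k)
    · obtain ⟨P, N, hP⟩ := exists_scaleHom_eq p
      have h1 : δ P = p := by
        change aeval _ P = p
        rw [← eval_one_scaleHom, hP]
        simp
      rw [← h1]
      refine Ideal.mem_map_of_mem _ ((hmem P).2 fun k => ?_)
      rw [hP]
      simp only [Polynomial.coeff_C_mul]
      exact Ideal.mul_mem_right _ _ hp
  rw [← hδ]
  exact Ideal.FG.map hH δ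

end Saturated

end MvPolynomial

end Saturation

section CompleteIntersections

lemma RingTheory.Sequence.isRegular_ofFn {R : Type*} [CommRing R] {r : ℕ} (f : Fin r → R)
    (hreg : ∀ i g, g * f i ∈ Ideal.span (f '' {k | k < i}) → g ∈ Ideal.span (f '' {k | k < i}))
    (htop : Ideal.span (Set.range f) ≠ ⊤) : RingTheory.Sequence.IsRegular R (List.ofFn f) := by
  refine ⟨⟨fun i hi => ?_⟩, fun h => htop ?_⟩
  · rw [isSMulRegular_quotient_iff_mem_of_smul_mem]
    rw [List.length_ofFn] at hi
    have htake : Ideal.ofList (List.take i (List.ofFn f)) =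
        Ideal.span (f '' {k | k < (⟨i, hi⟩ : Fin r)}) := by
      refine congrArg Ideal.span (Set.ext fun x => ?_)
      change x ∈ List.take i (List.ofFn f) ↔ _
      simp only [List.mem_take_iff_getElem, List.getElem_ofFn, List.length_ofFn, Set.mem_image]
      constructor
      · rintro ⟨k, hk, rfl⟩
        exact ⟨⟨k, by omega⟩, by simp [Fin.lt_def]; omega, rfl⟩
      · rintro ⟨k, hk, rfl⟩
        have := k.2
        have hk' : k.val < i := hk
        exact ⟨k, by omega, rfl⟩
    simp only [htake, smul_eq_mul, Ideal.mul_top, List.getElem_ofFn]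
    intro x hx
    rw [mul_comm] at hx
    exact hreg _ x hx
  · rw [smul_eq_mul, Ideal.mul_top] at h
    rw [h]
    refine congrArg Ideal.span (Set.ext fun x => ?_)
    change _ ↔ x ∈ List.ofFn f
    simp [List.mem_ofFn]

namespace Rabinowitsch

open Polynomial

variable {A : Type*} [CommRing A] (s : A)

lemma exists_pow_mul_sub_C_mem (p : A[X]) :
    ∃ N p', C s ^ N * p - C p' ∈ Ideal.span {C s * X - 1} := by
  induction p using Polynomial.induction_on' with
  | add p q hp hq =>
    obtain ⟨N, p', hp⟩ := hp
    obtain ⟨M, q', hq⟩ := hq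
    refine ⟨N + M, s ^ M * p' + s ^ N * q', ?_⟩
    have := Ideal.add_mem _ (Ideal.mul_mem_left _ (C s ^ M) hp) (Ideal.mul_mem_left _ (C s ^ N) hq)
    convert this using 1
    simp only [map_add, map_mul, map_pow]
    ring
  | monomial n a =>
    refine ⟨n, a, ?_⟩
    rw [Ideal.mem_span_singleton]
    have h1 : C s ^ n * monomial n a - C a = C a * ((C s * X) ^ n - 1 ^ n) := by
      rw [← C_mul_X_pow_eq_monomial]; ring
    rw [h1]
    exact (sub_dvd_pow_sub_pow _ _ n).mul_left _

lemma mem_of_pow_mul_mem {s : A} {Q : Ideal A[X]} (hQ : C s * X - 1 ∈ Q) {N : ℕ} {p : A[X]}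
    (h : C s ^ N * p ∈ Q) : p ∈ Q := by
  have h1 : (C s * X) ^ N - 1 ^ N ∈ Q := Ideal.mem_of_dvd _ (sub_dvd_pow_sub_pow _ _ N) hQ
  have h2 : p = X ^ N * (C s ^ N * p) - ((C s * X) ^ N - 1 ^ N) * p := by ring
  rw [h2]
  exact Ideal.sub_mem _ (Ideal.mul_mem_left _ _ h) (Ideal.mul_mem_right _ _ h1)

lemma exists_pow_mul_mem_of_C_mem {s : A} {P : Ideal A} {a : A}
    (h : C a ∈ Ideal.span {C s * X - 1} ⊔ P.map C) : ∃ N, s ^ N * a ∈ P := by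
  let q : A →+* A ⧸ P := Ideal.Quotient.mk P
  let L := Localization.Away (q s)
  let χ : A[X] →+* L := eval₂RingHom ((algebraMap _ L).comp q) (IsLocalization.Away.invSelf (q s))
  have hχ : Ideal.span {C s * X - 1} ⊔ P.map C ≤ RingHom.ker χ := by
    refine sup_le ((Ideal.span_singleton_le_iff_mem _).2 ?_) (Ideal.map_le_iff_le_comap.2 ?_)
    · rw [RingHom.mem_ker]
      simp [χ, IsLocalization.Away.mul_invSelf]
    · intro b hb
      have : q b = 0 := Ideal.Quotient.eq_zero_iff_mem.2 hb
      simp [RingHom.mem_ker, χ, this]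
  have h0 : algebraMap _ L (q a) = 0 := by
    have := hχ h
    rw [RingHom.mem_ker] at this
    simpa [χ] using this
  obtain ⟨⟨_, N, rfl⟩, hN⟩ := (IsLocalization.map_eq_zero_iff (Submonoid.powers (q s)) L _).1 h0
  refine ⟨N, Ideal.Quotient.eq_zero_iff_mem.1 ?_⟩
  simpa [q] using hN

lemma mem_sup_of_mul_C_mem {s : A} {P : Ideal A} {u : A} (hu : ∀ g, g * u ∈ P → s * g ∈ P)
    {p : A[X]} (h : p * C u ∈ Ideal.span {C s * X - 1} ⊔ P.map C) :
    p ∈ Ideal.span {C s * X - 1} ⊔ P.map C := by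
  set Q := Ideal.span {C s * X - 1} ⊔ P.map C
  have hQ : C s * X - 1 ∈ Q := Ideal.mem_sup_left (Ideal.mem_span_singleton_self _)
  obtain ⟨N, p', hp'⟩ := exists_pow_mul_sub_C_mem s p
  have hp'Q : C s ^ N * p - C p' ∈ Q := Ideal.mem_sup_left hp'
  have h1 : C (p' * u) ∈ Q := by
    have : C (p' * u) = C s ^ N * (p * C u) - (C s ^ N * p - C p') * C u := by
      rw [map_mul]; ring
    rw [this]
    exact Ideal.sub_mem _ (Ideal.mul_mem_left _ _ h) (Ideal.mul_mem_right _ _ hp'Q)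
  obtain ⟨M, hM⟩ := exists_pow_mul_mem_of_C_mem h1
  rw [← mul_assoc] at hM
  have h2 : C s ^ (M + 1) * C p' ∈ Q := by
    have := Ideal.mem_map_of_mem (C : A →+* A[X]) (hu _ hM)
    rw [← mul_assoc, ← pow_succ', map_mul, map_pow] at this
    exact Ideal.mem_sup_right this
  have h3 := mem_of_pow_mul_mem hQ h2
  refine mem_of_pow_mul_mem hQ (N := N) ?_
  simpa using Ideal.add_mem _ hp'Q h3

end Rabinowitsch

namespace MonicDeformation

open MvPolynomial

section Colon

variable {V σ : Type*} [CommRing V] [IsDomain V]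

/-- The elements `g` such that a nonzero constant multiple of `g * u` lies in `P`. -/
def saturatedColon (P : Ideal (MvPolynomial σ V)) (u : MvPolynomial σ V) :
    Ideal (MvPolynomial σ V) where
  carrier := {g | ∃ c : V, c ≠ 0 ∧ C c * (g * u) ∈ P}
  zero_mem' := ⟨1, one_ne_zero, by simp⟩
  add_mem' := by
    rintro a b ⟨c, hc, hca⟩ ⟨d, hd, hdb⟩
    refine ⟨c * d, mul_ne_zero hc hd, ?_⟩
    have := Ideal.add_mem _ (Ideal.mul_mem_left _ (C d) hca) (Ideal.mul_mem_left _ (C c) hdb)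
    convert this using 1
    rw [map_mul]; ring
  smul_mem' := by
    rintro a b ⟨c, hc, hcb⟩
    refine ⟨c, hc, ?_⟩
    have := Ideal.mul_mem_left _ a hcb
    convert this using 1
    rw [smul_eq_mul]; ring

lemma mem_saturatedColon_of_C_mul_mem {P : Ideal (MvPolynomial σ V)} {u : MvPolynomial σ V}
    (c : V) (hc : c ≠ 0) (g : MvPolynomial σ V) (h : C c * g ∈ saturatedColon P u) :
    g ∈ saturatedColon P u := by
  obtain ⟨d, hd, h⟩ := h
  refine ⟨d * c, mul_ne_zero hd hc, ?_⟩
  rw [map_mul]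
  convert h using 1
  ring

variable [ValuationRing V] [Finite σ]

lemma exists_mul_mem_of_saturatedColon_le {P : Ideal (MvPolynomial σ V)} {u : MvPolynomial σ V}
    (h : saturatedColon P u ≤ (IsLocalRing.maximalIdeal V).map C ⊔ P) :
    ∃ s : MvPolynomial σ V, s - 1 ∈ (IsLocalRing.maximalIdeal V).map C ∧
      ∀ g ∈ saturatedColon P u, s * g ∈ P := by
  have hfg := fg_of_saturated (saturatedColon P u) mem_saturatedColon_of_C_mul_mem
  obtain ⟨s, hs, hsP⟩ := Submodule.exists_sub_one_mem_and_smul_le_of_fg_of_le_sup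
    (I := (IsLocalRing.maximalIdeal V).map C) (N := P) hfg le_rfl (by
      intro g hg
      obtain ⟨r, hr, q, hq, rfl⟩ := Submodule.mem_sup.1 (h hg)
      have hqN : q ∈ saturatedColon P u :=
        ⟨1, one_ne_zero, Ideal.mul_mem_left _ _ (Ideal.mul_mem_right _ _ hq)⟩
      have hrN : r ∈ saturatedColon P u := by simpa using Ideal.sub_mem _ hg hqN
      rw [add_comm]
      refine Submodule.add_mem_sup hq ?_
      obtain ⟨a, ha, r', rfl⟩ := exists_eq_C_mul_of_mem_map_C hr
      by_cases ha0 : a = 0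
      · simp [ha0]
      · exact Submodule.smul_mem_smul (Ideal.mem_map_of_mem _ ha)
          (mem_saturatedColon_of_C_mul_mem a ha0 _ hrN))
  exact ⟨s, hs, fun g hg => hsP ⟨g, hg, rfl⟩⟩

end Colon

section Denominator

variable {V : Type*} [CommRing V] [IsDomain V] [ValuationRing V] {n : ℕ}
  {F : Fin n → MvPolynomial (Fin n) V} {f : Fin n → Polynomial V}

lemma exists_denominator (hf : ∀ i, (f i).Monic)
    (hF : ∀ i, F i - Polynomial.aeval (X i) (f i) ∈ (IsLocalRing.maximalIdeal V).map C) :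
    ∃ s : MvPolynomial (Fin n) V, s - 1 ∈ (IsLocalRing.maximalIdeal V).map C ∧
      (∀ (j : Fin n) (g), g * F j ∈ Ideal.span (F '' {i | i < j}) →
        s * g ∈ Ideal.span (F '' {i | i < j})) ∧
      (∀ (c : V) (g), c ≠ 0 → C c * g ∈ Ideal.span (Set.range F) →
        s * g ∈ Ideal.span (Set.range F)) := by
  have hcol : ∀ j : Fin n, ∃ s : MvPolynomial (Fin n) V,
      s - 1 ∈ (IsLocalRing.maximalIdeal V).map C ∧
      ∀ g ∈ saturatedColon (Ideal.span (F '' {i | i < j})) (F j),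
        s * g ∈ Ideal.span (F '' {i | i < j}) := by
    refine fun j => exists_mul_mem_of_saturatedColon_le ?_
    rintro g ⟨c, hc, h⟩
    exact mem_prefixIdeal_of_mul_mem hf hF j
      (mem_prefixIdeal_of_C_mul_mem hf hF hc j j.2.le h)
  have hrange : F '' {i | i.val < n} = Set.range F := by simp
  obtain ⟨t, ht, htF⟩ := exists_mul_mem_of_saturatedColon_le
      (P := Ideal.span (Set.range F)) (u := 1) (by
    rintro g ⟨c, hc, h⟩
    rw [mul_one, ← hrange] at h
    rw [← hrange]
    exact mem_prefixIdeal_of_C_mul_mem hf hF hc n le_rfl h)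
  choose s hs hsF using hcol
  refine ⟨t * ∏ j, s j, ?_, ?_, ?_⟩
  · rw [← Ideal.Quotient.eq, map_mul, map_prod, (Ideal.Quotient.eq).2 ht,
      Finset.prod_congr rfl fun j _ => (Ideal.Quotient.eq).2 (hs j)]
    simp
  · intro j g hg
    rw [← Finset.mul_prod_erase _ _ (Finset.mem_univ j)]
    have := Ideal.mul_mem_left _ (t * ∏ i ∈ Finset.univ.erase j, s i)
      (hsF j g ⟨1, one_ne_zero, by simpa using hg⟩)
    convert this using 1
    ring
  · intro c g hc hg
    have := Ideal.mul_mem_left _ (∏ j, s j) (htF g ⟨c, hc, by simpa using hg⟩)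
    convert this using 1
    ring

end Denominator

section CompleteIntersection

lemma mem_span_image_symm_iff {A B ι : Type*} [CommRing A] [CommRing B] (e : A ≃+* B) (f : ι → B)
    (S : Set ι) (p : A) :
    p ∈ Ideal.span ((fun i => e.symm (f i)) '' S) ↔ e p ∈ Ideal.span (f '' S) := by
  have h : Ideal.span ((fun i => e.symm (f i)) '' S) = (Ideal.span (f '' S)).comap e := by
    rw [← Ideal.map_symm, Ideal.map_span, Set.image_image]
  rw [h, Ideal.mem_comap]

lemma isCompleteIntersectionOfFiniteType_range {R A : Type*} [CommRing R] [CommRing A]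
    [Algebra R A] {N r : ℕ} (φ : MvPolynomial (Fin N) R →ₐ[R] A)
    (g : Fin r → MvPolynomial (Fin N) R)
    (hg : RingTheory.Sequence.IsRegular (MvPolynomial (Fin N) R) (List.ofFn g))
    (hker : RingHom.ker φ = Ideal.span (Set.range g)) :
    Algebra.IsCompleteIntersectionOfFiniteType R φ.range := by
  refine ⟨N, r, g, hg, ?_⟩
  have h : RingHom.ker φ.rangeRestrict = Ideal.span (Set.range g) := by
    rw [← hker]
    ext p
    rw [RingHom.mem_ker, RingHom.mem_ker, Subtype.ext_iff]
    rfl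
  rw [← h]
  exact ⟨Ideal.quotientKerAlgEquivOfSurjective φ.rangeRestrict_surjective⟩

variable {V V' : Type*} [CommRing V] [IsDomain V] [ValuationRing V] [CommRing V'] [IsLocalRing V']
  [Algebra V V'] {n : ℕ} {F : Fin n → MvPolynomial (Fin n) V} {f : Fin n → Polynomial V}
  {y : Fin n → V'}

theorem exists_completeIntersection_subalgebra (hf : ∀ i, (f i).Monic)
    (hF : ∀ i, F i - Polynomial.aeval (X i) (f i) ∈ (IsLocalRing.maximalIdeal V).map C)
    (hm : ∀ a ∈ IsLocalRing.maximalIdeal V, algebraMap V V' a ∈ IsLocalRing.maximalIdeal V')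
    (hy : ∀ i, aeval y (F i) = 0)
    (hker : ∀ p, aeval y p = 0 → ∃ c : V, c ≠ 0 ∧ C c * p ∈ Ideal.span (Set.range F)) :
    ∃ B : Subalgebra V V', Algebra.IsCompleteIntersectionOfFiniteType V B ∧ ∀ i, y i ∈ B := by
  obtain ⟨s, hs1, hsreg, hsker⟩ := exists_denominator hf hF
  have hunit : IsUnit (aeval y s) := by
    by_contra hnu
    have h1 : (IsLocalRing.maximalIdeal V).map C ≤
        (IsLocalRing.maximalIdeal V').comap (aeval (R := V) y) :=
      Ideal.map_le_iff_le_comap.2 fun a ha => by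
        rw [Ideal.mem_comap, Ideal.mem_comap, aeval_C]; exact hm a ha
    have h2 := h1 hs1
    rw [Ideal.mem_comap, map_sub, map_one] at h2
    have h3 := Ideal.sub_mem _ ((IsLocalRing.mem_maximalIdeal _).2 hnu) h2
    rw [sub_sub_cancel] at h3
    exact (Ideal.ne_top_iff_one _).1 (IsLocalRing.maximalIdeal.isMaximal V').ne_top h3
  obtain ⟨u, hu⟩ := hunit.exists_right_inv
  let e := finSuccEquiv V n
  let f' : Fin (n + 1) → Polynomial (MvPolynomial (Fin n) V) :=
    Fin.cons (Polynomial.C s * Polynomial.X - 1) fun i => Polynomial.C (F i)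
  let θ : Polynomial (MvPolynomial (Fin n) V) →+* V' :=
    Polynomial.eval₂RingHom (aeval (R := V) y).toRingHom u
  let Θ : MvPolynomial (Fin (n + 1)) V →ₐ[V] V' := aeval (Fin.cons u y)
  have hΘ : ∀ p, Θ p = θ (e p) := by
    have : Θ.toRingHom = θ.comp e.toRingEquiv.toRingHom := by
      apply MvPolynomial.ringHom_ext
      · intro a; simp [Θ, θ, e, finSuccEquiv_apply]
      · intro i
        refine Fin.cases ?_ (fun i => ?_) i
        · simp [Θ, θ, e, finSuccEquiv_apply]
        · simp [Θ, θ, e, finSuccEquiv_apply]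
    exact fun p => congrArg (fun g => g p) this
  have hspan : ∀ S : Set (Fin n),
      Ideal.span (f' '' (insert 0 (Fin.succ '' S))) =
        Ideal.span {Polynomial.C s * Polynomial.X - 1} ⊔
          (Ideal.span (F '' S)).map Polynomial.C := by
    intro S
    rw [Set.image_insert_eq, Ideal.span_insert, Ideal.map_span, Set.image_image, Set.image_image]
    rfl
  have hrange : Ideal.span (Set.range f') = Ideal.span {Polynomial.C s * Polynomial.X - 1} ⊔
      (Ideal.span (Set.range F)).map Polynomial.C := by
    rw [← Set.image_univ, ← Set.image_univ, ← hspan]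
    congr 2
    ext i
    refine Fin.cases ?_ (fun i => ?_) i <;> simp
  have hθ : ∀ p, θ p = 0 ↔ p ∈ Ideal.span (Set.range f') := by
    intro p
    constructor
    · intro hp
      have hQ : Polynomial.C s * Polynomial.X - 1 ∈ Ideal.span (Set.range f') :=
        Ideal.subset_span ⟨0, rfl⟩
      obtain ⟨N, p', hp'⟩ := Rabinowitsch.exists_pow_mul_sub_C_mem s p
      have hp'θ : aeval y p' = 0 := by
        obtain ⟨w, hw⟩ := Ideal.mem_span_singleton.1 hp'
        have h1 := congrArg θ hw
        simp only [map_sub, map_mul, hp, mul_zero, map_one, zero_sub] at h1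
        simpa [θ, hu] using h1
      obtain ⟨c, hc, hcp⟩ := hker p' hp'θ
      have h2 := hsker c p' hc hcp
      have h3 : Polynomial.C s ^ 1 * Polynomial.C p' ∈ Ideal.span (Set.range f') := by
        rw [hrange, pow_one, ← map_mul]
        exact Ideal.mem_sup_right (Ideal.mem_map_of_mem _ h2)
      have h4 := Rabinowitsch.mem_of_pow_mul_mem hQ h3
      refine Rabinowitsch.mem_of_pow_mul_mem hQ (N := N) ?_
      have h5 : Polynomial.C s ^ N * p - Polynomial.C p' ∈ Ideal.span (Set.range f') := by
        rw [hrange]; exact Ideal.mem_sup_left hp'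
      simpa using Ideal.add_mem _ h5 h4
    · intro hp
      have : Ideal.span (Set.range f') ≤ RingHom.ker θ := by
        rw [Ideal.span_le]
        rintro _ ⟨i, rfl⟩
        refine Fin.cases ?_ (fun i => ?_) i
        · simp [f', θ, hu]
        · simpa [f', θ] using hy i
      exact this hp
  let g : Fin (n + 1) → MvPolynomial (Fin (n + 1)) V := fun i => e.symm (f' i)
  have hmem : ∀ (S : Set (Fin (n + 1))) p,
      p ∈ Ideal.span (g '' S) ↔ e p ∈ Ideal.span (f' '' S) :=
    fun S p => mem_span_image_symm_iff e.toRingEquiv f' S p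
  have hkerΘ : RingHom.ker Θ = Ideal.span (Set.range g) := by
    ext p
    rw [RingHom.mem_ker, hΘ, hθ, ← Set.image_univ, ← Set.image_univ, hmem]
  refine ⟨Θ.range, isCompleteIntersectionOfFiniteType_range Θ g ?_ hkerΘ,
    fun i => ⟨X i.succ, by simp [Θ]⟩⟩
  · refine RingTheory.Sequence.isRegular_ofFn g ?_ ?_
    · intro i p hp
      rw [hmem] at hp ⊢
      rw [map_mul, AlgEquiv.apply_symm_apply] at hp
      revert hp
      refine Fin.cases ?_ (fun j => ?_) i
      · intro hp
        have h0 : f' '' {k | k < 0} = ∅ := by simp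
        rw [h0, Ideal.span_empty, Ideal.mem_bot] at hp ⊢
        refine (mul_eq_zero.1 hp).resolve_right fun h => ?_
        have := congrArg (Polynomial.coeff · 0) h
        simp [f'] at this
      · have h1 : {k : Fin (n + 1) | k < j.succ} = insert 0 (Fin.succ '' {k | k < j}) := by
          ext k
          refine Fin.cases ?_ (fun k => ?_) k <;> simp
        rw [h1, hspan]
        exact Rabinowitsch.mem_sup_of_mul_C_mem (hsreg j)
    · rw [← hkerΘ, Ne, Ideal.eq_top_iff_one, RingHom.mem_ker, map_one]
      exact one_ne_zero

end CompleteIntersection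

end MonicDeformation

end CompleteIntersections

section GaussNorm

namespace MvPolynomial

variable {K Γ₀ σ τ : Type*} [Field K] [LinearOrderedCommGroupWithZero Γ₀] (w : Valuation K Γ₀)

/-- All coefficients have valuation at most one. -/
def IsIntegralFor (p : MvPolynomial σ K) : Prop := ∀ d, w (coeff d p) ≤ 1

/-- All coefficients have valuation less than one. -/
def IsSmallFor (p : MvPolynomial σ K) : Prop := ∀ d, w (coeff d p) < 1

variable {w}

namespace IsSmallFor

lemma isIntegralFor {p : MvPolynomial σ K} (hp : IsSmallFor w p) : IsIntegralFor w p :=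
  fun d => (hp d).le

lemma zero : IsSmallFor w (0 : MvPolynomial σ K) := fun d => by simp

lemma add {p q : MvPolynomial σ K} (hp : IsSmallFor w p) (hq : IsSmallFor w q) :
    IsSmallFor w (p + q) :=
  fun d => by rw [coeff_add]; exact w.map_add_lt (hp d) (hq d)

lemma neg {p : MvPolynomial σ K} (hp : IsSmallFor w p) : IsSmallFor w (-p) :=
  fun d => by rw [coeff_neg, w.map_neg]; exact hp d

lemma sub {p q : MvPolynomial σ K} (hp : IsSmallFor w p) (hq : IsSmallFor w q) :
    IsSmallFor w (p - q) := by
  rw [sub_eq_add_neg]; exact hp.add hq.neg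

lemma sum {α : Type*} {s : Finset α} {p : α → MvPolynomial σ K}
    (h : ∀ i ∈ s, IsSmallFor w (p i)) : IsSmallFor w (∑ i ∈ s, p i) :=
  Finset.sum_induction _ _ (fun _ _ => IsSmallFor.add) zero h

lemma mul_isIntegralFor {p q : MvPolynomial σ K} (hp : IsSmallFor w p)
    (hq : IsIntegralFor w q) : IsSmallFor w (p * q) := by
  classical
  intro d
  rw [coeff_mul]
  refine w.map_sum_lt one_ne_zero fun a _ => ?_
  rw [map_mul]
  exact mul_lt_one_of_lt_of_le (hp _) (hq _)

lemma C {a : K} (ha : w a < 1) : IsSmallFor w (C a : MvPolynomial σ K) := by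
  classical
  intro d
  rw [coeff_C]
  split_ifs
  · exact ha
  · simp

end IsSmallFor

namespace IsIntegralFor

lemma zero : IsIntegralFor w (0 : MvPolynomial σ K) := IsSmallFor.zero.isIntegralFor

lemma add {p q : MvPolynomial σ K} (hp : IsIntegralFor w p) (hq : IsIntegralFor w q) :
    IsIntegralFor w (p + q) :=
  fun d => by rw [coeff_add]; exact w.map_add_le (hp d) (hq d)

lemma sum {α : Type*} {s : Finset α} {p : α → MvPolynomial σ K}
    (h : ∀ i ∈ s, IsIntegralFor w (p i)) : IsIntegralFor w (∑ i ∈ s, p i) :=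
  Finset.sum_induction _ _ (fun _ _ => IsIntegralFor.add) zero h

lemma mul {p q : MvPolynomial σ K} (hp : IsIntegralFor w p)
    (hq : IsIntegralFor w q) : IsIntegralFor w (p * q) := by
  classical
  intro d
  rw [coeff_mul]
  refine w.map_sum_le fun a _ => ?_
  rw [map_mul]
  exact mul_le_one' (hp _) (hq _)

lemma mul_isSmallFor {p q : MvPolynomial σ K} (hp : IsIntegralFor w p)
    (hq : IsSmallFor w q) : IsSmallFor w (p * q) := by
  rw [mul_comm]; exact hq.mul_isIntegralFor hp

lemma C {a : K} (ha : w a ≤ 1) : IsIntegralFor w (C a : MvPolynomial σ K) := by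
  classical
  intro d
  rw [coeff_C]
  split_ifs
  · exact ha
  · simp

lemma one : IsIntegralFor w (1 : MvPolynomial σ K) := by
  rw [← C_1]; exact IsIntegralFor.C (by simp)

lemma X (i : σ) : IsIntegralFor w (X i : MvPolynomial σ K) := by
  classical
  intro d
  rw [coeff_X]
  split_ifs <;> simp

lemma pow {p : MvPolynomial σ K} (hp : IsIntegralFor w p) (n : ℕ) : IsIntegralFor w (p ^ n) := by
  induction n with
  | zero => rw [pow_zero]; exact one
  | succ n ih => rw [pow_succ]; exact ih.mul hp

lemma prod {α : Type*} {s : Finset α} {p : α → MvPolynomial σ K}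
    (h : ∀ i ∈ s, IsIntegralFor w (p i)) : IsIntegralFor w (∏ i ∈ s, p i) :=
  Finset.prod_induction _ _ (fun _ _ => IsIntegralFor.mul) one h

end IsIntegralFor

lemma aeval_eq_sum_C_mul (x : σ → MvPolynomial τ K) (p : MvPolynomial σ K) :
    aeval x p = ∑ d ∈ p.support, C (coeff d p) * ∏ i ∈ d.support, x i ^ d i := by
  rw [aeval_def, eval₂_eq, algebraMap_eq]

lemma IsIntegralFor.aeval {p : MvPolynomial σ K} (hp : IsIntegralFor w p)
    {x : σ → MvPolynomial τ K} (hx : ∀ i, IsIntegralFor w (x i)) :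
    IsIntegralFor w (aeval x p) := by
  rw [aeval_eq_sum_C_mul]
  exact IsIntegralFor.sum fun d _ =>
    (IsIntegralFor.C (hp d)).mul (IsIntegralFor.prod fun i _ => (hx i).pow _)

lemma IsSmallFor.aeval {p : MvPolynomial σ K} (hp : IsSmallFor w p)
    {x : σ → MvPolynomial τ K} (hx : ∀ i, IsIntegralFor w (x i)) :
    IsSmallFor w (aeval x p) := by
  rw [aeval_eq_sum_C_mul]
  exact IsSmallFor.sum fun d _ =>
    (IsSmallFor.C (hp d)).mul_isIntegralFor (IsIntegralFor.prod fun i _ => (hx i).pow _)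

lemma IsSmallFor.rename {p : MvPolynomial σ K} (hp : IsSmallFor w p) (k : σ → τ) :
    IsSmallFor w (rename k p) := by
  rw [rename_eq_aeval]
  exact hp.aeval fun i => IsIntegralFor.X _

lemma IsIntegralFor.of_isSmallFor_sub {p q : MvPolynomial σ K} (h : IsSmallFor w (p - q))
    (hq : IsIntegralFor w q) : IsIntegralFor w p := by
  have := h.isIntegralFor.add hq
  rwa [sub_add_cancel] at this

section Congruence

variable (w) in
/-- Two integral polynomials with the same reduction. -/
structure IsCongrFor (p q : MvPolynomial σ K) : Prop where
  left : IsIntegralFor w p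
  right : IsIntegralFor w q
  sub : IsSmallFor w (p - q)

lemma IsCongrFor.mul {p q p' q' : MvPolynomial σ K} (h : IsCongrFor w p q)
    (h' : IsCongrFor w p' q') : IsCongrFor w (p * p') (q * q') := by
  refine ⟨h.left.mul h'.left, h.right.mul h'.right, ?_⟩
  have : p * p' - q * q' = (p - q) * p' + q * (p' - q') := by ring
  rw [this]
  exact (h.sub.mul_isIntegralFor h'.left).add (h.right.mul_isSmallFor h'.sub)

lemma IsCongrFor.refl {p : MvPolynomial σ K} (h : IsIntegralFor w p) : IsCongrFor w p p :=
  ⟨h, h, by rw [sub_self]; exact IsSmallFor.zero⟩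

lemma IsCongrFor.pow {p q : MvPolynomial σ K} (h : IsCongrFor w p q) (n : ℕ) :
    IsCongrFor w (p ^ n) (q ^ n) := by
  induction n with
  | zero => simpa using IsCongrFor.refl IsIntegralFor.one
  | succ n ih => rw [pow_succ, pow_succ]; exact ih.mul h

lemma IsCongrFor.prod {α : Type*} {s : Finset α} {p q : α → MvPolynomial σ K}
    (h : ∀ i ∈ s, IsCongrFor w (p i) (q i)) : IsCongrFor w (∏ i ∈ s, p i) (∏ i ∈ s, q i) := by
  classical
  induction s using Finset.induction_on with
  | empty => simpa using IsCongrFor.refl IsIntegralFor.one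
  | insert a s ha ih =>
    rw [Finset.prod_insert ha, Finset.prod_insert ha]
    exact (h a (Finset.mem_insert_self a s)).mul
      (ih fun i hi => h i (Finset.mem_insert_of_mem hi))

lemma IsIntegralFor.aeval_sub_aeval {p : MvPolynomial σ K} (hp : IsIntegralFor w p)
    {x y : σ → MvPolynomial τ K} (h : ∀ i, IsCongrFor w (x i) (y i)) :
    IsSmallFor w (MvPolynomial.aeval x p - MvPolynomial.aeval y p) := by
  rw [aeval_eq_sum_C_mul, aeval_eq_sum_C_mul, ← Finset.sum_sub_distrib]
  refine IsSmallFor.sum fun d _ => ?_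
  rw [← mul_sub]
  exact (IsIntegralFor.C (hp d)).mul_isSmallFor
    (IsCongrFor.prod fun i _ => (h i).pow _).sub

end Congruence

section Eval

variable {M : Type*} [CommRing M] [Algebra K M] {v : Valuation M Γ₀}
  (hvw : ∀ a, v (algebraMap K M a) = w a)
include hvw

lemma IsIntegralFor.valuation_aeval_le {p : MvPolynomial σ K} (hp : IsIntegralFor w p)
    {y : σ → M} (hy : ∀ i, v (y i) ≤ 1) : v (MvPolynomial.aeval y p) ≤ 1 := by
  rw [MvPolynomial.aeval_def, eval₂_eq]
  refine v.map_sum_le fun d _ => ?_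
  rw [map_mul, map_prod, hvw]
  refine mul_le_one' (hp d) (Finset.prod_le_one' fun i _ => ?_)
  rw [map_pow]
  exact pow_le_one' (hy i) _

lemma IsSmallFor.valuation_aeval_lt {p : MvPolynomial σ K} (hp : IsSmallFor w p)
    {y : σ → M} (hy : ∀ i, v (y i) ≤ 1) : v (MvPolynomial.aeval y p) < 1 := by
  rw [MvPolynomial.aeval_def, eval₂_eq]
  refine v.map_sum_lt one_ne_zero fun d _ => ?_
  rw [map_mul, map_prod, hvw]
  refine mul_lt_one_of_lt_of_le (hp d) (Finset.prod_le_one' fun i _ => ?_)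
  rw [map_pow]
  exact pow_le_one' (hy i) _

end Eval

end MvPolynomial

end GaussNorm

section MonicPresentations

lemma RingHom.ker_comp_eq_span {A B C : Type*} [CommRing A] [CommRing B] [CommRing C]
    {Ψ : A →+* B} {g : B →+* C} (hΨ : Function.Surjective Ψ) {s t : Set A}
    (hs : RingHom.ker g = Ideal.span (Ψ '' s)) (ht : RingHom.ker Ψ = Ideal.span t) :
    RingHom.ker (g.comp Ψ) = Ideal.span (s ∪ t) := by
  rw [← RingHom.comap_ker, hs, ← Ideal.map_span, Ideal.comap_map_of_surjective Ψ hΨ,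
    ← RingHom.ker_eq_comap_bot, ht, Ideal.span_union]

open MvPolynomial

variable {K M Γ₀ : Type*} [Field K] [Field M] [Algebra K M] [LinearOrderedCommGroupWithZero Γ₀]

/-- The reduction of `p` is a constant. -/
def MvPolynomial.IsAlmostConst {σ : Type*} (w : Valuation K Γ₀) (p : MvPolynomial σ K) : Prop :=
  ∃ a, w a ≤ 1 ∧ IsSmallFor w (p - C a)

/-- A presentation of the field extension `M` of `K` by integral generators `y i` and relations
`F i` whose reductions are monic polynomials in one variable each. -/
structure MonicPresentation (w : Valuation K Γ₀) (v : Valuation M Γ₀) where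
  ι : Type
  finite : Finite ι
  y : ι → M
  F : ι → MvPolynomial ι K
  f : ι → Polynomial K
  y_le : ∀ i, v (y i) ≤ 1
  monic : ∀ i, (f i).Monic
  coeff_le : ∀ i k, w ((f i).coeff k) ≤ 1
  small : ∀ i, IsSmallFor w (F i - Polynomial.aeval (X i) (f i))
  ker_eq : RingHom.ker (aeval (R := K) y).toRingHom = Ideal.span (Set.range F)
  surj : Function.Surjective (aeval (R := K) y)

/-- There are monic presentations in which the integral elements of any given finite set are
represented by polynomials with constant reduction. -/
def HasMonicPresentations (w : Valuation K Γ₀) (v : Valuation M Γ₀) : Prop :=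
  ∀ E : Set M, E.Finite → ∃ S : MonicPresentation w v, ∀ e ∈ E, v e ≤ 1 →
    ∃ p, aeval S.y p = e ∧ IsAlmostConst w p

lemma HasMonicPresentations.of_surjective {w : Valuation K Γ₀} {v : Valuation M Γ₀}
    (hvw : ∀ a, v (algebraMap K M a) = w a) (h : Function.Surjective (algebraMap K M)) :
    HasMonicPresentations w v := by
  intro E _
  have hz (a : K) : aeval (R := K) (fun i : Empty => (i.elim : M)) (C a) = algebraMap K M a :=
    aeval_C _ _
  refine ⟨⟨Empty, inferInstance, fun i => i.elim, fun i => i.elim, fun i => i.elim,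
    fun i => i.elim, fun i => i.elim, fun i => i.elim, fun i => i.elim, ?_, ?_⟩, ?_⟩
  · rw [Set.range_eq_empty, Ideal.span_empty]
    refine (RingHom.injective_iff_ker_eq_bot _).1 ?_
    intro p q hpq
    obtain ⟨a, rfl⟩ := C_surjective Empty p
    obtain ⟨b, rfl⟩ := C_surjective Empty q
    have := (hz a).symm.trans (hpq.trans (hz b))
    rw [(algebraMap K M).injective this]
  · intro m
    obtain ⟨a, rfl⟩ := h m
    exact ⟨C a, hz a⟩
  · intro e _ he
    obtain ⟨a, rfl⟩ := h e
    refine ⟨C a, hz a, a, by rwa [hvw] at he, ?_⟩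
    rw [sub_self]
    exact IsSmallFor.zero

section Tower

variable {L : Type*} [Field L] [Algebra K L] [Algebra M L] [IsScalarTower K M L]
  {σ τ : Type*}

/-- Evaluation of the second set of variables. -/
noncomputable def MvPolynomial.evalRight (x : τ → M) :
    MvPolynomial (σ ⊕ τ) K →ₐ[K] MvPolynomial σ M :=
  aeval (Sum.elim X fun j => C (x j))

lemma MvPolynomial.evalRight_rename_inr (x : τ → M) (p : MvPolynomial τ K) :
    evalRight (σ := σ) x (rename Sum.inr p) = C (aeval x p) := by
  rw [evalRight, aeval_rename]
  have : (Sum.elim X fun j => C (x j)) ∘ Sum.inr =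
    algebraMap M (MvPolynomial σ M) ∘ x := rfl
  rw [this, aeval_algebraMap_apply, algebraMap_eq]

lemma MvPolynomial.evalRight_X_inl (x : τ → M) (i : σ) :
    evalRight (K := K) x (X (Sum.inl i)) = X i := by
  simp [evalRight]

lemma MvPolynomial.evalRight_eq (x : τ → M) :
    (evalRight (K := K) (σ := σ) x).toRingHom =
      (map (aeval (R := K) x).toRingHom).comp (sumAlgEquiv K σ τ).toRingEquiv.toRingHom := by
  refine MvPolynomial.ringHom_ext (fun a => ?_) (fun i => ?_)
  · simp [evalRight, MvPolynomial.algebraMap_apply]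
  · rcases i with i | i <;> simp [evalRight]

lemma MvPolynomial.aeval_comp_evalRight (x : τ → M) (y : σ → L) (p : MvPolynomial (σ ⊕ τ) K) :
    aeval y (evalRight x p) = aeval (Sum.elim y fun j => algebraMap M L (x j)) p := by
  have : ((aeval (R := M) y).restrictScalars K).comp (evalRight x) =
      aeval (Sum.elim y fun j => algebraMap M L (x j)) := by
    refine MvPolynomial.algHom_ext fun i => ?_
    rcases i with i | i <;> simp [evalRight]
  exact DFunLike.congr_fun this p

lemma MvPolynomial.evalRight_surjective {x : τ → M}
    (hx : Function.Surjective (aeval (R := K) x)) :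
    Function.Surjective (evalRight (K := K) (σ := σ) x) := by
  intro p
  induction p using MvPolynomial.induction_on with
  | C a =>
    obtain ⟨q, rfl⟩ := hx a
    exact ⟨_, evalRight_rename_inr x q⟩
  | add p q hp hq =>
    obtain ⟨p, rfl⟩ := hp
    obtain ⟨q, rfl⟩ := hq
    exact ⟨p + q, map_add _ _ _⟩
  | mul_X p i hp =>
    obtain ⟨p, rfl⟩ := hp
    exact ⟨p * X (Sum.inl i), by rw [map_mul, evalRight_X_inl]⟩

lemma MvPolynomial.ker_evalRight {x : τ → M} {s : Set (MvPolynomial τ K)}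
    (hs : RingHom.ker (aeval (R := K) x).toRingHom = Ideal.span s) :
    RingHom.ker (evalRight (K := K) (σ := σ) x).toRingHom =
      Ideal.span (rename Sum.inr '' s) := by
  rw [evalRight_eq, ← RingHom.comap_ker, MvPolynomial.ker_map, hs, Ideal.map_span]
  have := Ideal.map_symm (I := Ideal.span (C '' s)) (sumAlgEquiv K σ τ).toRingEquiv
  refine this.symm.trans ?_
  rw [Ideal.map_span, ← Set.image_comp]
  congr 1
  refine Set.image_congr fun p _ => ?_
  have h := DFunLike.congr_fun (sumAlgEquiv_comp_rename_inr K σ τ) p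
  refine (AlgEquiv.symm_apply_eq _).2 ?_
  exact h.symm

variable {w : Valuation K Γ₀} {v : Valuation M Γ₀} (hvw : ∀ a, v (algebraMap K M a) = w a)
  {x : τ → M} (hx : ∀ i, v (x i) ≤ 1)
include hvw hx

lemma MvPolynomial.IsAlmostConst.isSmallFor {p : MvPolynomial τ K} (h : IsAlmostConst w p)
    (hp : v (aeval x p) < 1) : IsSmallFor w p := by
  obtain ⟨a, ha, hs⟩ := h
  have h1 := hs.valuation_aeval_lt hvw hx
  rw [map_sub, aeval_C] at h1
  have h2 : w a < 1 := by
    rw [← hvw]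
    have := v.map_sub_lt hp h1
    rwa [sub_sub_cancel] at this
  have := hs.add (IsSmallFor.C h2)
  rwa [sub_add_cancel] at this

variable {E : Set M} (hE : ∀ e ∈ E, v e ≤ 1 → ∃ p, MvPolynomial.aeval x p = e ∧ IsAlmostConst w p)
include hE

lemma MvPolynomial.exists_lift_of_isSmallFor {G : MvPolynomial σ M} (hG : IsSmallFor v G)
    (hGE : ∀ d, coeff d G ∈ E) :
    ∃ G' : MvPolynomial (σ ⊕ τ) K, IsSmallFor w G' ∧ evalRight x G' = G := by
  choose p hp hp' using fun d => hE _ (hGE d) (hG d).le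
  refine ⟨∑ d ∈ G.support, rename Sum.inr (p d) * rename Sum.inl (monomial d 1), ?_, ?_⟩
  · refine IsSmallFor.sum fun d _ => ?_
    have h1 : IsSmallFor w (p d) := (hp' d).isSmallFor hvw hx (by rw [hp]; exact hG d)
    refine (h1.rename _).mul_isIntegralFor ?_
    rw [rename_eq_aeval]
    refine IsIntegralFor.aeval (fun d' => ?_) fun i => IsIntegralFor.X _
    classical
    rw [coeff_monomial]
    split_ifs <;> simp
  · rw [map_sum]
    conv_rhs => rw [G.as_sum]
    refine Finset.sum_congr rfl fun d _ => ?_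
    rw [map_mul, evalRight_rename_inr, hp]
    have : evalRight x (rename Sum.inl (monomial d (1 : K))) =
        (monomial d (1 : M) : MvPolynomial σ M) := by
      rw [evalRight, aeval_rename, Sum.elim_comp_inl, aeval_monomial, map_one, one_mul,
        monomial_eq, C_1, one_mul]
    rw [this, C_mul_monomial, mul_one]

lemma MvPolynomial.exists_lift_of_isAlmostConst {G : MvPolynomial σ M} {u : M} (hu : v u ≤ 1)
    (huE : u ∈ E) (hG : IsSmallFor v (G - C u)) (hGE : ∀ d, coeff d (G - C u) ∈ E) :
    ∃ G' : MvPolynomial (σ ⊕ τ) K, IsAlmostConst w G' ∧ evalRight x G' = G := by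
  obtain ⟨G', hG', h⟩ := exists_lift_of_isSmallFor hvw hx hE hG hGE
  obtain ⟨p, hp, a, ha, hs⟩ := hE u huE hu
  refine ⟨rename Sum.inr p + G', ⟨a, ha, ?_⟩, ?_⟩
  · have := (hs.rename (Sum.inr : τ → σ ⊕ τ)).add hG'
    rw [map_sub, rename_C] at this
    convert this using 1
    ring
  · rw [map_add, evalRight_rename_inr, hp, h]
    ring

omit hvw hx in
lemma MvPolynomial.exists_lift_of_monic {f : Polynomial M} (hf : f.Monic)
    (hintegers : ∀ k, v (f.coeff k) ≤ 1) (hfE : ∀ k, f.coeff k ∈ E) (i : σ) :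
    ∃ (f' : Polynomial K) (G : MvPolynomial (σ ⊕ τ) K), f'.Monic ∧ (∀ k, w (f'.coeff k) ≤ 1) ∧
      IsSmallFor w (G - Polynomial.aeval (X (Sum.inl i)) f') ∧
      evalRight x G = Polynomial.aeval (X i) f := by
  choose p hp a ha hs using fun k => hE _ (hfE k) (hintegers k)
  set n := f.natDegree
  have hdeg : (∑ k ∈ Finset.range n, Polynomial.C (a k) * Polynomial.X ^ k).degree <
      (n : WithBot ℕ) := by
    refine (Polynomial.degree_sum_le _ _).trans_lt ((Finset.sup_lt_iff (WithBot.bot_lt_coe n)).2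
      fun k hk => ?_)
    refine (Polynomial.degree_C_mul_X_pow_le _ _).trans_lt ?_
    exact WithBot.coe_lt_coe.2 (Finset.mem_range.1 hk)
  refine ⟨Polynomial.X ^ n + ∑ k ∈ Finset.range n, Polynomial.C (a k) * Polynomial.X ^ k,
    X (Sum.inl i) ^ n + ∑ k ∈ Finset.range n, rename Sum.inr (p k) * X (Sum.inl i) ^ k,
    Polynomial.monic_X_pow_add hdeg, fun k => ?_, ?_, ?_⟩
  · rw [Polynomial.coeff_add]
    refine w.map_add_le ?_ ?_
    · rw [Polynomial.coeff_X_pow]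
      split_ifs <;> simp
    · rw [Polynomial.finsetSum_coeff]
      refine w.map_sum_le fun j _ => ?_
      rw [Polynomial.coeff_C_mul_X_pow]
      split_ifs
      · exact ha j
      · simp
  · rw [map_add, map_pow, Polynomial.aeval_X, map_sum, add_sub_add_left_eq_sub,
      ← Finset.sum_sub_distrib]
    refine IsSmallFor.sum fun k _ => ?_
    rw [map_mul, map_pow, Polynomial.aeval_X, Polynomial.aeval_C, ← sub_mul, algebraMap_eq,
      ← rename_C Sum.inr, ← map_sub]
    exact ((hs k).rename _).mul_isIntegralFor ((IsIntegralFor.X _).pow _)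
  · conv_rhs => rw [hf.as_sum]
    rw [map_add, map_add, map_pow, map_pow, evalRight_X_inl, Polynomial.aeval_X, map_sum, map_sum]
    congr 1
    refine Finset.sum_congr rfl fun k _ => ?_
    rw [map_mul, map_mul, map_pow, map_pow, evalRight_X_inl, evalRight_rename_inr, hp,
      Polynomial.aeval_X, Polynomial.aeval_C, algebraMap_eq]

end Tower

lemma MvPolynomial.finite_range_coeff {R σ : Type*} [CommSemiring R] (p : MvPolynomial σ R) :
    (Set.range fun d => coeff d p).Finite := by
  refine ((p.support.finite_toSet.image fun d => coeff d p).insert 0).subset ?_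
  rintro _ ⟨d, rfl⟩
  by_cases h : d ∈ p.support
  · exact Or.inr ⟨d, h, rfl⟩
  · exact Or.inl (notMem_support_iff.1 h)

theorem HasMonicPresentations.trans {L : Type*} [Field L] [Algebra K L] [Algebra M L]
    [IsScalarTower K M L] {w : Valuation K Γ₀} {v : Valuation M Γ₀} {u : Valuation L Γ₀}
    (hvw : ∀ a, v (algebraMap K M a) = w a) (huv : ∀ a, u (algebraMap M L a) = v a)
    (h₁ : HasMonicPresentations w v) (h₂ : HasMonicPresentations v u) :
    HasMonicPresentations w u := by
  intro E hE
  obtain ⟨T, hT⟩ := h₂ E hE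
  have hT' : ∀ e, ∃ p a, e ∈ E → u e ≤ 1 →
      aeval T.y p = e ∧ v a ≤ 1 ∧ IsSmallFor v (p - C a) := by
    intro e
    by_cases h : e ∈ E ∧ u e ≤ 1
    · obtain ⟨p, hp, a, ha, hs⟩ := hT e h.1 h.2
      exact ⟨p, a, fun _ _ => ⟨hp, ha, hs⟩⟩
    · exact ⟨0, 0, fun h₁ h₂ => absurd ⟨h₁, h₂⟩ h⟩
  choose p a hpa using hT'
  have := T.finite
  obtain ⟨E₁, hE₁, hTF, hTf, hp, ha⟩ : ∃ E₁ : Set M, E₁.Finite ∧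
      (∀ i d, coeff d (T.F i - Polynomial.aeval (X i) (T.f i)) ∈ E₁) ∧
      (∀ i k, (T.f i).coeff k ∈ E₁) ∧ (∀ e ∈ E, ∀ d, coeff d (p e - C (a e)) ∈ E₁) ∧
      ∀ e ∈ E, a e ∈ E₁ := by
    have h1 : (⋃ i, Set.range fun d => coeff d (T.F i - Polynomial.aeval (X i) (T.f i))).Finite :=
      Set.finite_iUnion fun i => MvPolynomial.finite_range_coeff _
    have h2 : (⋃ i, Set.range (T.f i).coeff).Finite :=
      Set.finite_iUnion fun i => Polynomial.finite_range_coeff _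
    have h3 : (⋃ e ∈ E, Set.range fun d => coeff d (p e - C (a e))).Finite :=
      hE.biUnion fun e _ => MvPolynomial.finite_range_coeff _
    exact ⟨_, (h1.union h2).union (h3.union (hE.image a)),
      fun i d => Or.inl (Or.inl (Set.mem_iUnion_of_mem i ⟨d, rfl⟩)),
      fun i k => Or.inl (Or.inr (Set.mem_iUnion_of_mem i ⟨k, rfl⟩)),
      fun e he d => Or.inr (Or.inl (Set.mem_biUnion he ⟨d, rfl⟩)),
      fun e he => Or.inr (Or.inr ⟨e, he, rfl⟩)⟩
  obtain ⟨S, hS⟩ := h₁ E₁ hE₁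
  have := S.finite
  have hF (i : T.ι) : ∃ (f' : Polynomial K) (G : MvPolynomial (T.ι ⊕ S.ι) K), f'.Monic ∧
      (∀ k, w (f'.coeff k) ≤ 1) ∧ IsSmallFor w (G - Polynomial.aeval (X (Sum.inl i)) f') ∧
      evalRight S.y G = T.F i := by
    obtain ⟨f', G, h1, h2, h3, h4⟩ := exists_lift_of_monic hS (T.monic i)
      (T.coeff_le i) (hTf i) i
    obtain ⟨G', h5, h6⟩ := exists_lift_of_isSmallFor hvw S.y_le hS (T.small i) (hTF i)
    refine ⟨f', G + G', h1, h2, ?_, ?_⟩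
    · convert h3.add h5 using 1
      ring
    · rw [map_add, h4, h6]
      ring
  choose f' G hf' hf'_le hG hGF using hF
  have haeval : (aeval (R := K) (Sum.elim T.y fun j => algebraMap M L (S.y j))).toRingHom =
      (aeval (R := M) T.y).toRingHom.comp (evalRight (K := K) S.y).toRingHom :=
    RingHom.ext fun q => (aeval_comp_evalRight S.y T.y q).symm
  refine ⟨⟨T.ι ⊕ S.ι, inferInstance, Sum.elim T.y fun j => algebraMap M L (S.y j),
    Sum.elim G fun j => rename Sum.inr (S.F j), Sum.elim f' S.f, ?_, ?_, ?_, ?_, ?_, ?_⟩, ?_⟩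
  · rintro (i | i)
    · exact T.y_le i
    · exact (huv _).trans_le (S.y_le i)
  · rintro (i | i)
    · exact hf' i
    · exact S.monic i
  · rintro (i | i)
    · exact hf'_le i
    · exact S.coeff_le i
  · rintro (i | i)
    · exact hG i
    · have := (S.small i).rename (Sum.inr : S.ι → T.ι ⊕ S.ι)
      rwa [map_sub, ← Polynomial.aeval_algHom_apply, rename_X] at this
  · rw [haeval, Set.Sum.elim_range]
    refine RingHom.ker_comp_eq_span (evalRight_surjective S.surj) ?_ ?_
    · rw [T.ker_eq, ← Set.range_comp]
      congr 2
      exact funext fun i => (hGF i).symm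
    · have := ker_evalRight (σ := T.ι) S.ker_eq
      rwa [← Set.range_comp] at this
  · intro m
    obtain ⟨q, rfl⟩ := T.surj m
    obtain ⟨q, rfl⟩ := evalRight_surjective (σ := T.ι) S.surj q
    exact ⟨q, (aeval_comp_evalRight S.y T.y q).symm⟩
  · intro e he hue
    obtain ⟨G', h1, h2⟩ := exists_lift_of_isAlmostConst hvw S.y_le hS (hpa e he hue).2.1
      (ha e he) (hpa e he hue).2.2 (hp e he)
    exact ⟨G', by rw [← aeval_comp_evalRight, h2, (hpa e he hue).1], h1⟩

end MonicPresentations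

section LevelSystems

open MvPolynomial

variable {K Γ₀ : Type*} [Field K] [LinearOrderedCommGroupWithZero Γ₀]

/-- A presentation of `K[X]` by polynomials of degree less than the degree of `Q` together with a
scalar multiple of `Q`, with relations whose reductions are monic polynomials in one variable
each. -/
structure LevelSystem (w : Valuation K Γ₀) (V : Valuation (Polynomial K) Γ₀)
    (Q : Polynomial K) where
  ι : Type
  finite : Finite ι
  q : ι → Polynomial K
  natDegree_lt : ∀ i, (q i).natDegree < Q.natDegree
  q_le : ∀ i, V (q i) ≤ 1
  b : K
  b_ne_zero : b ≠ 0
  b_val : w b = V Q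
  F : ι → MvPolynomial (Option ι) K
  f : ι → Polynomial K
  monic : ∀ i, (f i).Monic
  coeff_le : ∀ i k, w ((f i).coeff k) ≤ 1
  small : ∀ i, IsSmallFor w (F i - Polynomial.aeval (X (some i)) (f i))
  surj : Function.Surjective
    (aeval (R := K) fun o : Option ι => o.elim (Polynomial.C b⁻¹ * Q) q)
  ker_eq : RingHom.ker
    (aeval (R := K) fun o : Option ι => o.elim (Polynomial.C b⁻¹ * Q) q).toRingHom =
      Ideal.span (Set.range F)

namespace LevelSystem

variable {w : Valuation K Γ₀} {V : Valuation (Polynomial K) Γ₀} {Q : Polynomial K}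

/-- The generators of a level system. -/
noncomputable def pt (S : LevelSystem w V Q) (o : Option S.ι) : Polynomial K :=
  o.elim (Polynomial.C S.b⁻¹ * Q) S.q

/-- `g` is a scalar times an element with reduction one. -/
def Resolves (S : LevelSystem w V Q) (g : Polynomial K) : Prop :=
  ∃ (c : K) (h : MvPolynomial (Option S.ι) K), IsSmallFor w h ∧
    g = Polynomial.C c * aeval S.pt (1 + h)

variable (w V) in
/-- There are level systems in degree `e` resolving any given finite set of polynomials. -/
def Exists (e : ℕ) : Prop :=
  ∃ Q₀ : Polynomial K, Q₀.Monic ∧ Q₀.natDegree = e ∧ ∀ Q : Polynomial K, Q.Monic →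
    Q.natDegree = e → V Q ≤ V Q₀ → ∀ G : Set (Polynomial K), G.Finite →
      (∀ g ∈ G, g.natDegree < e) → ∃ S : LevelSystem w V Q, ∀ g ∈ G, S.Resolves g

variable (w V) in
/-- All sufficiently good level systems in degree `e` resolve the polynomials in `T`. -/
def Eventually (e : ℕ) (T : Set (Polynomial K)) : Prop :=
  ∃ Q₁ : Polynomial K, Q₁.Monic ∧ Q₁.natDegree = e ∧ ∀ Q : Polynomial K, Q.Monic →
    Q.natDegree = e → V Q ≤ V Q₁ → ∃ G : Set (Polynomial K), G.Finite ∧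
      (∀ g ∈ G, g.natDegree < e) ∧ ∀ S : LevelSystem w V Q, (∀ u ∈ G, S.Resolves u) →
        ∀ g ∈ T, S.Resolves g

lemma C_b_mul_aeval (S : LevelSystem w V Q) :
    Polynomial.C S.b * aeval S.pt (X none : MvPolynomial (Option S.ι) K) = Q := by
  rw [aeval_X, pt, Option.elim_none, ← mul_assoc, ← Polynomial.C_mul,
    mul_inv_cancel₀ S.b_ne_zero, Polynomial.C_1, one_mul]

lemma aeval_C_mul (S : LevelSystem w V Q) (a : K) (p : MvPolynomial (Option S.ι) K) :
    aeval S.pt (C a * p) = Polynomial.C a * aeval S.pt p := by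
  rw [map_mul, aeval_C, Polynomial.algebraMap_eq]

namespace Resolves

variable {S : LevelSystem w V Q}

lemma of_C (S : LevelSystem w V Q) (a : K) : S.Resolves (Polynomial.C a) :=
  ⟨a, 0, IsSmallFor.zero, by simp⟩

lemma C_mul {g : Polynomial K} (h : S.Resolves g) (a : K) :
    S.Resolves (Polynomial.C a * g) := by
  obtain ⟨c, h, hs, rfl⟩ := h
  exact ⟨a * c, h, hs, by rw [Polynomial.C_mul, mul_assoc]⟩

end Resolves

variable (hV : ∀ a, V (algebraMap K (Polynomial K) a) = w a)
include hV

lemma pt_le (S : LevelSystem w V Q) (o : Option S.ι) : V (S.pt o) ≤ 1 := by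
  cases o with
  | some i => exact S.q_le i
  | none =>
    have hb : w S.b ≠ 0 := (w.ne_zero_iff).2 S.b_ne_zero
    rw [pt, Option.elim_none, map_mul, ← Polynomial.algebraMap_eq, hV, map_inv₀, ← S.b_val,
      inv_mul_cancel₀ hb]

lemma val_one_add (S : LevelSystem w V Q) {h : MvPolynomial (Option S.ι) K}
    (hs : IsSmallFor w h) : V (aeval S.pt (1 + h)) = 1 := by
  rw [map_add, map_one]
  exact V.map_one_add_of_lt (hs.valuation_aeval_lt hV (S.pt_le hV))

lemma val_C_mul_one_add (S : LevelSystem w V Q) {h : MvPolynomial (Option S.ι) K}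
    (hs : IsSmallFor w h) (c : K) : V (Polynomial.C c * aeval S.pt (1 + h)) = w c := by
  rw [map_mul, S.val_one_add hV hs, mul_one, ← Polynomial.algebraMap_eq, hV]

lemma Resolves.add {S : LevelSystem w V Q} {g₁ g₂ : Polynomial K} (h₁ : S.Resolves g₁)
    (h₂ : S.Resolves g₂) (hv₁ : V g₁ ≤ V (g₁ + g₂)) (hv₂ : V g₂ ≤ V (g₁ + g₂)) :
    S.Resolves (g₁ + g₂) := by
  obtain ⟨c₁, h₁, hs₁, rfl⟩ := h₁
  obtain ⟨c₂, h₂, hs₂, rfl⟩ := h₂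
  set g := Polynomial.C c₁ * aeval S.pt (1 + h₁) + Polynomial.C c₂ * aeval S.pt (1 + h₂) with hg
  rw [S.val_C_mul_one_add hV hs₁] at hv₁
  rw [S.val_C_mul_one_add hV hs₂] at hv₂
  by_cases h0 : V g = 0
  · rw [h0, le_zero_iff, map_eq_zero] at hv₁ hv₂
    refine ⟨0, 0, IsSmallFor.zero, ?_⟩
    rw [hg, hv₁, hv₂]
    simp
  have key {c : K} {h : MvPolynomial (Option S.ι) K} (hc : w c ≤ V g) (hs : IsSmallFor w h) :
      V (Polynomial.C c * aeval S.pt h) < V g := by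
    rw [map_mul, ← Polynomial.algebraMap_eq, hV]
    have hlt := hs.valuation_aeval_lt hV (S.pt_le hV)
    calc w c * V (aeval S.pt h) ≤ V g * V (aeval S.pt h) := mul_le_mul_left hc _
      _ < V g * 1 := by
        exact mul_lt_mul_of_pos_left hlt (zero_lt_iff.2 h0)
      _ = V g := mul_one _
  have hlt := V.map_add_lt (key hv₁ hs₁) (key hv₂ hs₂)
  have heq : Polynomial.C (c₁ + c₂) =
      g - (Polynomial.C c₁ * aeval S.pt h₁ + Polynomial.C c₂ * aeval S.pt h₂) := by
    rw [hg, map_add, map_add, map_add, map_one]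
    ring
  have hc : w (c₁ + c₂) = V g := by
    rw [← hV, Polynomial.algebraMap_eq, heq]
    exact V.map_sub_eq_of_lt_left hlt
  have hc0 : c₁ + c₂ ≠ 0 := fun h => h0 (by rw [← hc, h, map_zero])
  have hle {c : K} (h : w c ≤ V g) : w (c / (c₁ + c₂)) ≤ 1 := by
    rw [map_div₀, hc]
    exact (div_le_one₀ (zero_lt_iff.2 h0)).2 h
  refine ⟨c₁ + c₂, C (c₁ / (c₁ + c₂)) * h₁ + C (c₂ / (c₁ + c₂)) * h₂,
    ((IsIntegralFor.C (hle hv₁)).mul_isSmallFor hs₁).add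
      ((IsIntegralFor.C (hle hv₂)).mul_isSmallFor hs₂), ?_⟩
  rw [map_add (aeval S.pt), map_one, map_add (aeval S.pt), aeval_C_mul, aeval_C_mul,
    mul_add, mul_add, ← mul_assoc,
    ← mul_assoc, ← Polynomial.C_mul, ← Polynomial.C_mul, mul_div_cancel₀ _ hc0,
    mul_div_cancel₀ _ hc0, heq]
  ring

end LevelSystem

end LevelSystems

section LevelSystemExtension

open MvPolynomial

variable {K Γ₀ : Type*} [Field K] [LinearOrderedCommGroupWithZero Γ₀]

namespace LevelSystem

variable {w : Valuation K Γ₀} {V : Valuation (Polynomial K) Γ₀} {Q : Polynomial K} {e : ℕ}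

variable (V) in
lemma exists_monic_le_le {Q₁ Q₂ : Polynomial K} (hm₁ : Q₁.Monic) (hd₁ : Q₁.natDegree = e)
    (hm₂ : Q₂.Monic) (hd₂ : Q₂.natDegree = e) :
    ∃ Q : Polynomial K, Q.Monic ∧ Q.natDegree = e ∧ V Q ≤ V Q₁ ∧ V Q ≤ V Q₂ := by
  rcases le_total (V Q₁) (V Q₂) with h | h
  · exact ⟨Q₁, hm₁, hd₁, le_rfl, h⟩
  · exact ⟨Q₂, hm₂, hd₂, h, le_rfl⟩

namespace Eventually

lemma empty : Eventually w V e ∅ :=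
  ⟨Polynomial.X ^ e, Polynomial.monic_X_pow e, Polynomial.natDegree_X_pow e,
    fun _ _ _ _ => ⟨∅, Set.finite_empty, by simp, by simp⟩⟩

lemma union {T₁ T₂ : Set (Polynomial K)} (h₁ : Eventually w V e T₁)
    (h₂ : Eventually w V e T₂) : Eventually w V e (T₁ ∪ T₂) := by
  obtain ⟨Q₁, hm₁, hd₁, h₁⟩ := h₁
  obtain ⟨Q₂, hm₂, hd₂, h₂⟩ := h₂
  obtain ⟨Q₀, hm, hd, hle₁, hle₂⟩ := exists_monic_le_le V hm₁ hd₁ hm₂ hd₂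
  refine ⟨Q₀, hm, hd, fun Q hQm hQd hQ => ?_⟩
  obtain ⟨G₁, hf₁, hG₁, h₁⟩ := h₁ Q hQm hQd (hQ.trans hle₁)
  obtain ⟨G₂, hf₂, hG₂, h₂⟩ := h₂ Q hQm hQd (hQ.trans hle₂)
  refine ⟨G₁ ∪ G₂, hf₁.union hf₂, ?_, fun S hS => ?_⟩
  · rintro g (hg | hg)
    · exact hG₁ g hg
    · exact hG₂ g hg
  · rintro g (hg | hg)
    · exact h₁ S (fun u hu => hS u (Or.inl hu)) g hg
    · exact h₂ S (fun u hu => hS u (Or.inr hu)) g hg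

lemma of_finite {T : Set (Polynomial K)} (hT : T.Finite)
    (h : ∀ g ∈ T, Eventually w V e {g}) : Eventually w V e T := by
  induction T, hT using Set.Finite.induction_on with
  | empty => exact empty
  | insert _ _ ih =>
    rw [Set.insert_eq]
    exact (h _ (Set.mem_insert _ _)).union (ih fun g hg => h g (Set.mem_insert_of_mem _ hg))

lemma of_imp {T : Set (Polynomial K)} {g : Polynomial K} (h : Eventually w V e T)
    (hg : ∀ Q, ∀ S : LevelSystem w V Q, (∀ u ∈ T, S.Resolves u) → S.Resolves g) :
    Eventually w V e {g} := by
  obtain ⟨Q₁, hm, hd, h⟩ := h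
  refine ⟨Q₁, hm, hd, fun Q hQm hQd hQ => ?_⟩
  obtain ⟨G, hf, hG, h⟩ := h Q hQm hQd hQ
  refine ⟨G, hf, hG, fun S hS => ?_⟩
  rintro _ rfl
  exact hg Q S (h S hS)

lemma of_natDegree_lt {g : Polynomial K} (hg : g.natDegree < e) : Eventually w V e {g} :=
  ⟨Polynomial.X ^ e, Polynomial.monic_X_pow e, Polynomial.natDegree_X_pow e,
    fun _ _ _ _ => ⟨{g}, Set.finite_singleton g, by simpa using hg, fun _ hS => hS⟩⟩

lemma C_mul {g : Polynomial K} (h : Eventually w V e {g}) (a : K) :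
    Eventually w V e {Polynomial.C a * g} :=
  h.of_imp fun _ _ hS => (hS g rfl).C_mul a

end Eventually

lemma natDegree_sub_lt_of_monic {p q : Polynomial K} (hp : p.Monic) (hq : q.Monic)
    (he : 0 < e) (hpe : p.natDegree = e) (hqe : q.natDegree = e) :
    (p - q).natDegree < e := by
  have h := Polynomial.degree_sub_lt_left (p := p) (q := q)
    (by rw [Polynomial.degree_eq_natDegree hp.ne_zero, Polynomial.degree_eq_natDegree hq.ne_zero,
      hpe, hqe]) hp.ne_zero (by rw [hp, hq])
  rw [Polynomial.degree_eq_natDegree hp.ne_zero, hpe] at h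
  by_cases h0 : p - q = 0
  · rwa [h0, Polynomial.natDegree_zero]
  · exact (Polynomial.natDegree_lt_iff_degree_lt h0).2 h

lemma monic_sub_C (hQ : Q.Monic) (he : 0 < e) (hQe : Q.natDegree = e) (a : K) :
    (Q - Polynomial.C a).Monic ∧ (Q - Polynomial.C a).natDegree = e := by
  refine ⟨Polynomial.Monic.sub_of_left hQ (Polynomial.degree_C_le.trans_lt ?_), ?_⟩
  · rw [Polynomial.degree_eq_natDegree hQ.ne_zero, hQe]
    exact_mod_cast he
  · rw [Polynomial.natDegree_sub_C, hQe]

variable (hV : ∀ a, V (algebraMap K (Polynomial K) a) = w a)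
  (himm : ∀ g, V g ≠ 0 → ∃ a : K, V (g - Polynomial.C a) < V g)
include hV

lemma Eventually.add {g₁ g₂ : Polynomial K} (h₁ : Eventually w V e {g₁})
    (h₂ : Eventually w V e {g₂}) (hv₁ : V g₁ ≤ V (g₁ + g₂)) (hv₂ : V g₂ ≤ V (g₁ + g₂)) :
    Eventually w V e {g₁ + g₂} :=
  (h₁.union h₂).of_imp fun _ _ hS => (hS g₁ (Or.inl rfl)).add hV (hS g₂ (Or.inr rfl)) hv₁ hv₂

include himm

lemma exists_valuation_eq {g : Polynomial K} (hg : V g ≠ 0) :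
    ∃ a : K, a ≠ 0 ∧ w a = V g := by
  obtain ⟨a, ha⟩ := himm g hg
  have : w a = V g := by
    rw [← hV, Polynomial.algebraMap_eq, ← sub_sub_cancel g (Polynomial.C a)]
    exact V.map_sub_eq_of_lt_left ha
  refine ⟨a, fun h => hg ?_, this⟩
  rw [← this, h, map_zero]

lemma Eventually.of_monic {g : Polynomial K} (hg : g.Monic) (he : 0 < e) (hge : g.natDegree = e)
    (hg0 : V g ≠ 0) : Eventually w V e {g} := by
  obtain ⟨a, ha⟩ := himm g hg0
  obtain ⟨hm, hd⟩ := monic_sub_C hg he hge a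
  refine ⟨_, hm, hd, fun Q hQm hQd hQ => ⟨{g - Q}, Set.finite_singleton _, ?_, fun S hS => ?_⟩⟩
  · rintro _ rfl
    exact natDegree_sub_lt_of_monic hg hQm he hge hQd
  refine fun u hu => ?_
  rw [Set.mem_singleton_iff.1 hu]
  obtain ⟨c, h, hs, hc⟩ := hS _ rfl
  have hlt := hQ.trans_lt ha
  have hwc : w c = V g := by
    rw [← S.val_C_mul_one_add hV hs, ← hc]
    exact V.map_sub_eq_of_lt_left hlt
  have hc0 : c ≠ 0 := fun h => hg0 (by rw [← hwc, h, map_zero])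
  refine ⟨c, h + C (S.b / c) * X none, hs.add ?_, ?_⟩
  · refine (IsSmallFor.C ?_).mul_isIntegralFor (IsIntegralFor.X _)
    rw [map_div₀, hwc, S.b_val]
    exact (div_lt_one₀ (zero_lt_iff.2 hg0)).2 hlt
  · rw [← add_assoc, map_add (aeval S.pt), mul_add, ← hc, aeval_C_mul, ← mul_assoc,
      ← Polynomial.C_mul, mul_div_cancel₀ _ hc0, S.C_b_mul_aeval]
    ring

lemma Eventually.of_isIntegralFor (S : LevelSystem w V Q) (hQ : Q.Monic) (he : 0 < e)
    (hQe : Q.natDegree = e) {p : MvPolynomial (Option S.ι) K} (hp : IsIntegralFor w p)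
    (hval : V (MvPolynomial.aeval S.pt p) = 1) :
    Eventually w V e {MvPolynomial.aeval S.pt p} := by
  have hwb : w S.b ≠ 0 := w.ne_zero_iff.2 S.b_ne_zero
  have hQ0 : V Q ≠ 0 := by rwa [← S.b_val]
  obtain ⟨a, ha⟩ := himm Q hQ0
  obtain ⟨hm, hd⟩ := monic_sub_C hQ he hQe a
  have := S.finite
  refine ⟨_, hm, hd, fun Q' hQm hQd hQ' => ⟨Set.range S.q ∪ {Q - Q'},
    (Set.finite_range _).union (Set.finite_singleton _), ?_, fun S' hS' => ?_⟩⟩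
  · rintro _ (⟨i, rfl⟩ | rfl)
    · rw [← hQe]
      exact S.natDegree_lt i
    · exact natDegree_sub_lt_of_monic hQ hQm he hQe hQd
  rintro _ rfl
  have hlt := hQ'.trans_lt ha
  have key (o : Option S.ι) : ∃ (z : K) (p : MvPolynomial (Option S'.ι) K), w z ≤ 1 ∧
      IsSmallFor w (p - MvPolynomial.C z) ∧ MvPolynomial.aeval S'.pt p = S.pt o := by
    cases o with
    | some i =>
      obtain ⟨c, h, hs, hc⟩ := hS' _ (Or.inl ⟨i, rfl⟩)
      have hwc : w c ≤ 1 := by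
        rw [← S'.val_C_mul_one_add hV hs, ← hc]
        exact S.q_le i
      refine ⟨c, MvPolynomial.C c * (1 + h), hwc, ?_, ?_⟩
      · convert (IsIntegralFor.C hwc).mul_isSmallFor hs using 1
        ring
      · rw [aeval_C_mul, ← hc]
        rfl
    | none =>
      obtain ⟨c, h, hs, hc⟩ := hS' _ (Or.inr rfl)
      have hwc : w c = w S.b := by
        rw [← S'.val_C_mul_one_add hV hs, ← hc, S.b_val]
        exact V.map_sub_eq_of_lt_left hlt
      have hwz : w (c / S.b) ≤ 1 := by
        rw [map_div₀, hwc, div_self hwb]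
      refine ⟨c / S.b, MvPolynomial.C (c / S.b) * (1 + h) + MvPolynomial.C (S'.b / S.b) * X none,
        hwz, ?_, ?_⟩
      · have h1 : IsSmallFor w (MvPolynomial.C (S'.b / S.b) * X none :
            MvPolynomial (Option S'.ι) K) := by
          refine (IsSmallFor.C ?_).mul_isIntegralFor (IsIntegralFor.X _)
          rw [map_div₀, S'.b_val, S.b_val]
          exact (div_lt_one₀ (zero_lt_iff.2 hQ0)).2 hlt
        convert ((IsIntegralFor.C hwz).mul_isSmallFor hs).add h1 using 1
        ring
      · rw [map_add, aeval_C_mul, aeval_C_mul, div_eq_inv_mul, div_eq_inv_mul, Polynomial.C_mul,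
          Polynomial.C_mul, mul_assoc, mul_assoc, ← hc, C_b_mul_aeval, ← mul_add, sub_add_cancel]
        rfl
  choose z x hz hx hxS using key
  have hcongr (o : Option S.ι) : IsCongrFor w (x o) (MvPolynomial.C (z o)) :=
    ⟨IsIntegralFor.of_isSmallFor_sub (hx o) (IsIntegralFor.C (hz o)), IsIntegralFor.C (hz o), hx o⟩
  have hdiff := hp.aeval_sub_aeval hcongr
  have hC : MvPolynomial.aeval (fun o => (MvPolynomial.C (z o) : MvPolynomial (Option S'.ι) K)) p =
      MvPolynomial.C (MvPolynomial.aeval z p) :=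
    MvPolynomial.aeval_algebraMap_apply (MvPolynomial (Option S'.ι) K) z p
  rw [hC] at hdiff
  set t := MvPolynomial.aeval z p
  have hxp : MvPolynomial.aeval S'.pt (MvPolynomial.aeval x p) = MvPolynomial.aeval S.pt p := by
    have : ((MvPolynomial.aeval S'.pt).comp (MvPolynomial.aeval x)) = MvPolynomial.aeval S.pt :=
      MvPolynomial.algHom_ext fun o => by simp [hxS]
    exact DFunLike.congr_fun this p
  have ht : w t = 1 := by
    have h1 := hdiff.valuation_aeval_lt hV (S'.pt_le hV)
    rw [map_sub, hxp, aeval_C] at h1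
    rw [← hval] at h1 ⊢
    rw [← hV, ← sub_sub_cancel (MvPolynomial.aeval S.pt p) (algebraMap _ _ t)]
    exact V.map_sub_eq_of_lt_left h1
  have ht0 : t ≠ 0 := fun h => by rw [h, map_zero] at ht; exact zero_ne_one ht
  refine ⟨t, MvPolynomial.C t⁻¹ * (MvPolynomial.aeval x p - MvPolynomial.C t),
    (IsIntegralFor.C (by rw [map_inv₀, ht, inv_one])).mul_isSmallFor hdiff, ?_⟩
  rw [← aeval_C_mul, mul_add, ← mul_assoc, ← MvPolynomial.C_mul, mul_inv_cancel₀ ht0,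
    MvPolynomial.C_1, mul_one, one_mul, add_sub_cancel, hxp]

end LevelSystem

end LevelSystemExtension

section Expansion

open MvPolynomial

variable {K Γ₀ : Type*} [Field K] [LinearOrderedCommGroupWithZero Γ₀]

lemma Polynomial.exists_eq_sum_mul_pow {Q : Polynomial K} (hQ : Q.Monic)
    (hd : 0 < Q.natDegree) (f : Polynomial K) :
    ∃ (N : ℕ) (a : ℕ → Polynomial K), (∀ j, (a j).natDegree < Q.natDegree) ∧
      f = ∑ j ∈ Finset.range N, a j * Q ^ j := by
  induction hn : f.natDegree using Nat.strong_induction_on generalizing f with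
  | _ n ih =>
    by_cases hlt : f.natDegree < Q.natDegree
    · refine ⟨1, fun j => if j = 0 then f else 0, fun j => ?_, by simp⟩
      dsimp only
      split_ifs
      · exact hlt
      · rwa [Polynomial.natDegree_zero]
    · obtain ⟨N, a, ha, h⟩ := ih (f /ₘ Q).natDegree (by
        rw [Polynomial.natDegree_divByMonic f hQ]; omega) _ rfl
      refine ⟨N + 1, fun j => Nat.casesOn j (f %ₘ Q) a, fun j => ?_, ?_⟩
      · cases j with
        | zero =>
          refine Polynomial.natDegree_modByMonic_lt f hQ fun h1 => ?_
          rw [h1, Polynomial.natDegree_one] at hd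
          exact hd.ne rfl
        | succ j => exact ha j
      · rw [Finset.sum_range_succ', pow_zero, mul_one]
        conv_lhs => rw [← Polynomial.modByMonic_add_div f Q, h]
        rw [Finset.mul_sum, add_comm]
        congr 1
        refine Finset.sum_congr rfl fun j _ => ?_
        dsimp only
        ring

namespace LevelSystem

variable {w : Valuation K Γ₀} {V : Valuation (Polynomial K) Γ₀} {Q : Polynomial K} {e : ℕ}

lemma exists_last_max {N : ℕ} {γ : ℕ → K} (h : ∃ j < N, γ j ≠ 0) :
    ∃ k < N, γ k ≠ 0 ∧ (∀ j < N, w (γ j) ≤ w (γ k)) ∧ ∀ j < N, k < j → w (γ j) < w (γ k) := by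
  classical
  obtain ⟨j₀, hj₀, hγ⟩ := h
  obtain ⟨m, hm, hmax⟩ := (Finset.range N).exists_max_image (fun j => w (γ j))
    ⟨j₀, Finset.mem_range.2 hj₀⟩
  obtain ⟨k, hk, hkmax⟩ := ((Finset.range N).filter fun j => w (γ j) = w (γ m)).exists_max_image
    id ⟨m, Finset.mem_filter.2 ⟨hm, rfl⟩⟩
  rw [Finset.mem_filter] at hk
  refine ⟨k, Finset.mem_range.1 hk.1, fun h0 => hγ ?_, fun j hj => ?_, fun j hj hkj => ?_⟩
  · have := hmax j₀ (Finset.mem_range.2 hj₀)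
    rwa [← hk.2, h0, map_zero, le_zero_iff, map_eq_zero] at this
  · rw [hk.2]
    exact hmax j (Finset.mem_range.2 hj)
  · refine lt_of_le_of_ne (by rw [hk.2]; exact hmax j (Finset.mem_range.2 hj)) fun heq => ?_
    have := hkmax j (Finset.mem_filter.2 ⟨Finset.mem_range.2 hj, heq.trans hk.2⟩)
    exact absurd hkj (not_lt.2 this)

/-- A polynomial all of whose `Q`-adic coefficients are resolved is a scalar times an element whose
reduction is a monic polynomial in the variable attached to `Q`. -/
lemma exists_monic_reduction (S : LevelSystem w V Q) {N : ℕ} {a : ℕ → Polynomial K}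
    (ha : ∀ j < N, S.Resolves (a j)) {f : Polynomial K} (hf : f ≠ 0)
    (hfa : f = ∑ j ∈ Finset.range N, a j * Q ^ j) :
    ∃ (c : K) (F : MvPolynomial (Option S.ι) K) (g : Polynomial K), c ≠ 0 ∧ g.Monic ∧
      (∀ k, w (g.coeff k) ≤ 1) ∧ IsSmallFor w (F - Polynomial.aeval (X none) g) ∧
      f = Polynomial.C c * aeval S.pt F := by
  have ha' (j : ℕ) : ∃ (c : K) (h : MvPolynomial (Option S.ι) K), IsSmallFor w h ∧
      (j < N → a j = Polynomial.C c * aeval S.pt (1 + h)) := by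
    by_cases hj : j < N
    · obtain ⟨c, h, hs, hc⟩ := ha j hj
      exact ⟨c, h, hs, fun _ => hc⟩
    · exact ⟨0, 0, IsSmallFor.zero, fun h => absurd h hj⟩
  choose c h hs hc using ha'
  have hterm (j : ℕ) (hj : j < N) : a j * Q ^ j =
      Polynomial.C (c j * S.b ^ j) * aeval S.pt ((1 + h j) * X none ^ j) := by
    have hQ : Q ^ j =
        Polynomial.C S.b ^ j * aeval S.pt (X none : MvPolynomial (Option S.ι) K) ^ j := by
      rw [← mul_pow, S.C_b_mul_aeval]
    rw [hc j hj, map_mul (aeval S.pt), map_pow, Polynomial.C_mul, Polynomial.C_pow, hQ]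
    ring
  obtain ⟨k, hk, hk0, hmax, hlast⟩ := exists_last_max (w := w) (N := N)
    (γ := fun j => c j * S.b ^ j) (by
      by_contra! hcon
      refine hf (hfa.trans (Finset.sum_eq_zero fun j hj => ?_))
      rw [hterm j (Finset.mem_range.1 hj), hcon j (Finset.mem_range.1 hj), Polynomial.C_0,
        zero_mul])
  set γ : ℕ → K := fun j => c j * S.b ^ j with hγ
  have hwk : 0 < w (γ k) := zero_lt_iff.2 (w.ne_zero_iff.2 hk0)
  have hle (j : ℕ) (hj : j < N) : w (γ j / γ k) ≤ 1 := by
    rw [map_div₀]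
    exact (div_le_one₀ hwk).2 (hmax j hj)
  have hlt (j : ℕ) (hj : j < N) (hkj : k < j) : w (γ j / γ k) < 1 := by
    rw [map_div₀]
    exact (div_lt_one₀ hwk).2 (hlast j hj hkj)
  have hdeg : (∑ j ∈ Finset.range k, Polynomial.C (γ j / γ k) * Polynomial.X ^ j).degree <
      (k : WithBot ℕ) := by
    refine (Polynomial.degree_sum_le _ _).trans_lt ((Finset.sup_lt_iff (WithBot.bot_lt_coe k)).2
      fun j hj => ?_)
    exact (Polynomial.degree_C_mul_X_pow_le _ _).trans_lt
      (WithBot.coe_lt_coe.2 (Finset.mem_range.1 hj))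
  have hg : Polynomial.X ^ k + ∑ j ∈ Finset.range k, Polynomial.C (γ j / γ k) * Polynomial.X ^ j =
      ∑ j ∈ Finset.range N, Polynomial.C (if j ≤ k then γ j / γ k else 0) * Polynomial.X ^ j := by
    rw [← Finset.sum_subset (Finset.range_subset_range.2 (Nat.succ_le_of_lt hk)),
      Finset.sum_range_succ, if_pos le_rfl, div_self hk0, Polynomial.C_1, one_mul, add_comm]
    · congr 1
      refine Finset.sum_congr rfl fun j hj => ?_
      rw [if_pos (Finset.mem_range.1 hj).le]
    · intro j _ hj
      rw [Finset.mem_range, Nat.lt_succ_iff] at hj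
      rw [if_neg hj, Polynomial.C_0, zero_mul]
  refine ⟨γ k, ∑ j ∈ Finset.range N, C (γ j / γ k) * ((1 + h j) * X none ^ j),
    Polynomial.X ^ k + ∑ j ∈ Finset.range k, Polynomial.C (γ j / γ k) * Polynomial.X ^ j,
    hk0, Polynomial.monic_X_pow_add hdeg, fun i => ?_, ?_, ?_⟩
  · rw [hg, Polynomial.finsetSum_coeff]
    refine w.map_sum_le fun j hj => ?_
    rw [Polynomial.coeff_C_mul_X_pow]
    split_ifs
    · exact hle j (Finset.mem_range.1 hj)
    · simp
    · simp
  · rw [hg, map_sum, ← Finset.sum_sub_distrib]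
    refine IsSmallFor.sum fun j hj => ?_
    have hX : IsIntegralFor w (X none ^ j : MvPolynomial (Option S.ι) K) :=
      (IsIntegralFor.X _).pow j
    rw [map_mul, map_pow, Polynomial.aeval_X, Polynomial.aeval_C, algebraMap_eq]
    split_ifs with hjk
    · convert ((IsIntegralFor.C (hle j (Finset.mem_range.1 hj))).mul_isSmallFor
        (hs j)).mul_isIntegralFor hX using 1
      ring
    · rw [C_0, zero_mul, sub_zero]
      exact (IsSmallFor.C (hlt j (Finset.mem_range.1 hj) (not_le.1 hjk))).mul_isIntegralFor
        ((IsIntegralFor.one.add (hs j).isIntegralFor).mul hX)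
  · rw [hfa, map_sum, Finset.mul_sum]
    refine Finset.sum_congr rfl fun j hj => ?_
    rw [hterm j (Finset.mem_range.1 hj), aeval_C_mul, ← mul_assoc, ← Polynomial.C_mul,
      mul_div_cancel₀ _ hk0]

variable (hV : ∀ a, V (algebraMap K (Polynomial K) a) = w a)
  (himm : ∀ g, V g ≠ 0 → ∃ a : K, V (g - Polynomial.C a) < V g)
include hV himm

lemma exists_one (h0 : ∀ g, g ≠ 0 → g.natDegree ≤ 1 → V g ≠ 0) : Exists w V 1 := by
  refine ⟨Polynomial.X, Polynomial.monic_X, Polynomial.natDegree_X, fun Q hQ hd _ G _ hG => ?_⟩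
  obtain ⟨b, hb0, hb⟩ := exists_valuation_eq hV himm (h0 Q hQ.ne_zero hd.le)
  obtain ⟨t, rfl⟩ : ∃ t, Q = Polynomial.X + Polynomial.C t :=
    ⟨Q.coeff 0, Polynomial.eq_X_add_C_of_natDegree_le_one hd.le |>.trans (by
      have : Q.coeff 1 = 1 := by rw [← hd]; exact hQ
      rw [this, Polynomial.C_1, one_mul])⟩
  set φ := aeval (R := K) (fun o : Option Empty =>
    o.elim (Polynomial.C b⁻¹ * (Polynomial.X + Polynomial.C t)) Empty.elim) with hφ
  set ψ := Polynomial.aeval (R := K) (C b * X none - C t : MvPolynomial (Option Empty) K) with hψ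
  have h1 : φ.comp ψ = AlgHom.id K _ := by
    refine Polynomial.algHom_ext ?_
    rw [AlgHom.comp_apply, hψ, Polynomial.aeval_X, hφ, map_sub, map_mul, aeval_C, aeval_C, aeval_X,
      Option.elim_none, Polynomial.algebraMap_eq, ← mul_assoc, ← Polynomial.C_mul,
      mul_inv_cancel₀ hb0, AlgHom.id_apply, Polynomial.C_1]
    ring
  have h2 : ψ.comp φ = AlgHom.id K _ := by
    refine MvPolynomial.algHom_ext fun o => ?_
    cases o with
    | some i => exact i.elim
    | none =>
      rw [AlgHom.comp_apply, hφ, aeval_X, Option.elim_none, map_mul, map_add, hψ,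
        Polynomial.aeval_X, Polynomial.aeval_C, Polynomial.aeval_C, algebraMap_eq,
        sub_add_cancel, ← mul_assoc, ← C_mul, inv_mul_cancel₀ hb0, C_1, one_mul, AlgHom.id_apply]
  have hinj : Function.Injective φ :=
    Function.LeftInverse.injective (g := ψ) fun p => DFunLike.congr_fun h2 p
  have hsurj : Function.Surjective φ :=
    Function.RightInverse.surjective (g := ψ) fun p => DFunLike.congr_fun h1 p
  refine ⟨⟨Empty, inferInstance, Empty.elim, fun i => i.elim, fun i => i.elim, b, hb0, hb,
    fun i => i.elim, fun i => i.elim, fun i => i.elim, fun i => i.elim, fun i => i.elim,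
    hsurj, ?_⟩, ?_⟩
  · rw [Set.range_eq_empty, Ideal.span_empty]
    exact (RingHom.injective_iff_ker_eq_bot _).1 hinj
  · intro g hg
    rw [Polynomial.eq_C_of_natDegree_eq_zero (Nat.lt_one_iff.1 (hG g hg))]
    exact Resolves.of_C _ _

end LevelSystem

end Expansion

section Elimination

open MvPolynomial

lemma MvPolynomial.ker_aeval_option {K σ : Type*} [CommRing K] (r : MvPolynomial σ K) :
    RingHom.ker (aeval (R := K) fun o : Option σ => o.elim r X).toRingHom =
      Ideal.span {X none - rename some r} := by
  set β := aeval (R := K) fun o : Option σ => o.elim r X with hβ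
  set I := Ideal.span {X none - rename some r}
  have hβs (p : MvPolynomial σ K) : β (rename some p) = p := by
    rw [hβ, aeval_rename]
    exact aeval_X_left_apply p
  have key : (Ideal.Quotient.mkₐ K I).comp ((rename some).comp β) = Ideal.Quotient.mkₐ K I := by
    refine MvPolynomial.algHom_ext fun o => ?_
    rw [AlgHom.comp_apply, AlgHom.comp_apply, hβ, aeval_X, Ideal.Quotient.mkₐ_eq_mk]
    cases o with
    | some i => simp
    | none =>
      refine ((Ideal.Quotient.mk_eq_mk_iff_sub_mem _ _).2 ?_).symm
      exact Ideal.subset_span rfl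
  refine le_antisymm (fun p hp => ?_) ?_
  · have hp' : β p = 0 := hp
    have := DFunLike.congr_fun key p
    rw [AlgHom.comp_apply, AlgHom.comp_apply, hp', map_zero, map_zero] at this
    exact Ideal.Quotient.eq_zero_iff_mem.1 this.symm
  · rw [Ideal.span_le, Set.singleton_subset_iff]
    change β (X none - rename some r) = 0
    rw [map_sub, hβs, hβ, aeval_X, Option.elim_none, sub_self]

lemma Set.range_option_elim {α β : Type*} (b : β) (f : α → β) :
    Set.range (fun o : Option α => o.elim b f) = Set.range f ∪ {b} := by
  ext y
  constructor
  · rintro ⟨_ | i, rfl⟩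
    · exact Or.inr rfl
    · exact Or.inl ⟨i, rfl⟩
  · rintro (⟨i, rfl⟩ | rfl)
    · exact ⟨some i, rfl⟩
    · exact ⟨none, rfl⟩

variable {K Γ₀ : Type*} [Field K] [LinearOrderedCommGroupWithZero Γ₀]

namespace LevelSystem

variable {w : Valuation K Γ₀} {V : Valuation (Polynomial K) Γ₀} {Q : Polynomial K} {e : ℕ}

lemma not_eventually_of_valuation_eq_zero
    (hV : ∀ a, V (algebraMap K (Polynomial K) a) = w a) (hL : Exists w V e)
    {P : Polynomial K} (hP : P ≠ 0) (hP0 : V P = 0) : ¬ Eventually w V e {P} := by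
  rintro ⟨Q₁, hm₁, hd₁, h₁⟩
  obtain ⟨Q₀, hm₀, hd₀, h₀⟩ := hL
  obtain ⟨Q, hm, hd, hle₁, hle₀⟩ := exists_monic_le_le V hm₁ hd₁ hm₀ hd₀
  obtain ⟨G, hf, hG, h₁⟩ := h₁ Q hm hd hle₁
  obtain ⟨S, hS⟩ := h₀ Q hm hd hle₀ G hf hG
  obtain ⟨c, h, hs, hc⟩ := h₁ S hS P rfl
  have := S.val_C_mul_one_add hV hs c
  rw [← hc, hP0] at this
  rw [eq_comm, map_eq_zero] at this
  exact hP (by rw [hc, this, Polynomial.C_0, zero_mul])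

variable (hV : ∀ a, V (algebraMap K (Polynomial K) a) = w a)
  (himm : ∀ g, V g ≠ 0 → ∃ a : K, V (g - Polynomial.C a) < V g)
include hV himm

lemma exists_reduction_of_not_eventually (he : 0 < e) (hL : Exists w V e) {f : Polynomial K}
    (hf : f ≠ 0) (hfe : ¬ Eventually w V e {f}) {G : Set (Polynomial K)} (hG : G.Finite)
    (hGe : ∀ g ∈ G, Eventually w V e {g}) :
    ∃ (Q : Polynomial K) (S : LevelSystem w V Q) (c : K) (F : MvPolynomial (Option S.ι) K)
      (g : Polynomial K), Q.natDegree = e ∧ (∀ u ∈ G, S.Resolves u) ∧ c ≠ 0 ∧ g.Monic ∧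
      (∀ k, w (g.coeff k) ≤ 1) ∧ IsSmallFor w (F - Polynomial.aeval (X none) g) ∧
      f = Polynomial.C c * aeval S.pt F ∧ V f < w c := by
  obtain ⟨Q₁, hm₁, hd₁, h₁⟩ := Eventually.of_finite hG hGe
  obtain ⟨Q₀, hm₀, hd₀, h₀⟩ := hL
  obtain ⟨Q, hm, hd, hle₁, hle₀⟩ := exists_monic_le_le V hm₁ hd₁ hm₀ hd₀
  obtain ⟨N, a, ha, hfa⟩ := Polynomial.exists_eq_sum_mul_pow hm (hd ▸ he) f
  obtain ⟨G', hf', hG', h₁⟩ := h₁ Q hm hd hle₁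
  obtain ⟨S, hS⟩ := h₀ Q hm hd hle₀ (G' ∪ a '' Finset.range N)
    (hf'.union ((Finset.finite_toSet _).image a)) (by
      rintro g (hg | ⟨j, _, rfl⟩)
      · exact hG' g hg
      · exact hd ▸ ha j)
  obtain ⟨c, F, g, hc, hg, hgle, hsmall, hfF⟩ := S.exists_monic_reduction
    (fun j hj => hS _ (Or.inr ⟨j, Finset.mem_coe.2 (Finset.mem_range.2 hj), rfl⟩)) hf hfa
  refine ⟨Q, S, c, F, g, hd, h₁ S (fun u hu => hS u (Or.inl hu)), hc, hg, hgle, hsmall, hfF, ?_⟩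
  have hgint : IsIntegralFor w (Polynomial.aeval (X none) g : MvPolynomial (Option S.ι) K) := by
    rw [Polynomial.aeval_eq_sum_range]
    refine IsIntegralFor.sum fun j _ => ?_
    rw [Algebra.smul_def, algebraMap_eq]
    exact (IsIntegralFor.C (hgle j)).mul ((IsIntegralFor.X _).pow j)
  have hF := IsIntegralFor.of_isSmallFor_sub hsmall hgint
  have hval : V f = w c * V (aeval S.pt F) := by
    rw [hfF, map_mul, ← Polynomial.algebraMap_eq, hV]
  have hwc : 0 < w c := zero_lt_iff.2 (w.ne_zero_iff.2 hc)
  rw [hval]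
  refine (mul_lt_mul_of_pos_left (lt_of_le_of_ne (hF.valuation_aeval_le hV (S.pt_le hV))
    fun h1 => hfe ?_) hwc).trans_eq (mul_one _)
  have := (Eventually.of_isIntegralFor hV himm S hm he hd hF h1).C_mul c
  rwa [← hfF] at this

end LevelSystem

end Elimination

section SimpleExtensions

open MvPolynomial

variable {K Γ₀ : Type*} [Field K] [LinearOrderedCommGroupWithZero Γ₀]

namespace LevelSystem

variable {w : Valuation K Γ₀} {V : Valuation (Polynomial K) Γ₀} {Q : Polynomial K} {e : ℕ}
  (hV : ∀ a, V (algebraMap K (Polynomial K) a) = w a)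
  (himm : ∀ g, V g ≠ 0 → ∃ a : K, V (g - Polynomial.C a) < V g)

include hV in
/-- Passing from a level system for `Q` to one for a polynomial `f` of larger degree. -/
lemma exists_succ (S : LevelSystem w V Q) {c : K} {F : MvPolynomial (Option S.ι) K}
    {f g : Polynomial K} (hdeg : Q.natDegree < f.natDegree) (hc : c ≠ 0) (hg : g.Monic)
    (hgle : ∀ k, w (g.coeff k) ≤ 1) (hsmall : IsSmallFor w (F - Polynomial.aeval (X none) g))
    (hfF : f = Polynomial.C c * aeval S.pt F) (hlt : V f < w c) {b : K} (hb : b ≠ 0)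
    (hbf : w b = V f) :
    ∃ S' : LevelSystem w V f, ∀ u, S.Resolves u → S'.Resolves u := by
  have hwc : 0 < w c := zero_lt_iff.2 (w.ne_zero_iff.2 hc)
  have := S.finite
  set β := aeval (R := K) fun o : Option (Option S.ι) => o.elim (C (c / b) * F) X with hβ
  have hβs (p : MvPolynomial (Option S.ι) K) : β (rename some p) = p := by
    rw [hβ, aeval_rename]
    exact aeval_X_left_apply p
  have hβsurj : Function.Surjective β := fun p => ⟨_, hβs p⟩
  have hcomp : aeval (R := K) (fun o : Option (Option S.ι) =>
      o.elim (Polynomial.C b⁻¹ * f) S.pt) = (aeval S.pt).comp β := by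
    refine MvPolynomial.algHom_ext fun o => ?_
    rw [AlgHom.comp_apply, hβ, aeval_X, aeval_X]
    cases o with
    | some o => rw [Option.elim_some, Option.elim_some, aeval_X]
    | none =>
      rw [Option.elim_none, Option.elim_none, aeval_C_mul, hfF, ← mul_assoc, ← Polynomial.C_mul,
        div_eq_inv_mul]
  have hkerβ : RingHom.ker β.toRingHom =
      Ideal.span {rename some F - C (b / c) * X none} := by
    have hu : IsUnit (C (-(b / c)) : MvPolynomial (Option (Option S.ι)) K) :=
      (isUnit_iff_ne_zero.2 (neg_ne_zero.2 (div_ne_zero hb hc))).map C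
    rw [hβ, ker_aeval_option, ← Ideal.span_singleton_mul_left_unit hu, map_mul, rename_C, mul_sub,
      ← mul_assoc, ← C_mul]
    have : -(b / c) * (c / b) = -1 := by field_simp
    rw [this, C_neg, C_neg, C_1]
    congr 2
    ring
  refine ⟨⟨Option S.ι, inferInstance, S.pt, ?_, S.pt_le hV, b, hb, hbf,
    fun o => o.elim (rename some F - C (b / c) * X none) fun i => rename some (S.F i),
    fun o => o.elim g S.f, ?_, ?_, ?_, ?_, ?_⟩, ?_⟩
  · rintro (_ | i)
    · exact (Polynomial.natDegree_C_mul_le _ _).trans_lt hdeg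
    · exact (S.natDegree_lt i).trans hdeg
  · rintro (_ | i)
    · exact hg
    · exact S.monic i
  · rintro (_ | i)
    · exact hgle
    · exact S.coeff_le i
  · rintro (_ | i)
    · have h1 := hsmall.rename (some : Option S.ι → Option (Option S.ι))
      rw [map_sub, ← Polynomial.aeval_algHom_apply, rename_X] at h1
      have h2 : IsSmallFor w (C (b / c) * X none : MvPolynomial (Option (Option S.ι)) K) := by
        refine (IsSmallFor.C ?_).mul_isIntegralFor (IsIntegralFor.X _)
        rw [map_div₀, hbf]
        exact (div_lt_one₀ hwc).2 hlt
      convert h1.sub h2 using 1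
      simp only [Option.elim_none]
      ring
    · have h1 := (S.small i).rename (some : Option S.ι → Option (Option S.ι))
      rwa [map_sub, ← Polynomial.aeval_algHom_apply, rename_X] at h1
  · rw [hcomp]
    exact S.surj.comp hβsurj
  · rw [hcomp, Set.range_option_elim]
    refine RingHom.ker_comp_eq_span (Ψ := β.toRingHom) (g := (aeval S.pt).toRingHom) hβsurj ?_ hkerβ
    rw [← Set.range_comp]
    refine S.ker_eq.trans (congrArg _ (congrArg _ (funext fun i => ?_)))
    exact (hβs (S.F i)).symm
  · rintro u ⟨a, h, hs, rfl⟩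
    refine ⟨a, rename some h, hs.rename _, ?_⟩
    congr 1
    have := DFunLike.congr_fun hcomp (rename some (1 + h))
    rw [AlgHom.comp_apply, hβs, map_add (rename some), map_one] at this
    exact this.symm

include hV himm

/-- One step up: either the level systems exist in a larger degree below the degree of `P`, or `P`
itself is reached. -/
lemma exists_level_or_not_eventually {P : Polynomial K} {d : ℕ} (hP : P.Monic)
    (hPd : P.natDegree = d) (hP0 : V P = 0) (h0 : ∀ g, g ≠ 0 → g.natDegree < d → V g ≠ 0)
    (he : 0 < e) (hL : Exists w V e) :
    (∃ e', e < e' ∧ e' < d ∧ Exists w V e') ∨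
      ∀ g : Polynomial K, g.natDegree < d → Eventually w V e {g} := by
  classical
  have hPe := not_eventually_of_valuation_eq_zero hV hL hP.ne_zero hP0
  by_cases hall : ∀ g : Polynomial K, g.natDegree < d → Eventually w V e {g}
  · exact Or.inr hall
  left
  have hex : ∃ n, ∃ g : Polynomial K, g.natDegree = n ∧ ¬ Eventually w V e {g} :=
    ⟨d, P, hPd, hPe⟩
  obtain ⟨f, hfn, hfe⟩ := Nat.find_spec hex
  have hmin (g : Polynomial K) (hg : g.natDegree < Nat.find hex) : Eventually w V e {g} := by
    by_contra h
    exact Nat.find_min hex hg ⟨g, rfl, h⟩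
  set e' := Nat.find hex
  have he'd : e' < d := by
    push Not at hall
    obtain ⟨g, hg, hge⟩ := hall
    by_contra! h
    exact hge (hmin g (hg.trans_le h))
  have hf0 : f ≠ 0 := by
    rintro rfl
    exact hfe (Eventually.of_natDegree_lt (by rwa [Polynomial.natDegree_zero]))
  set f₁ := Polynomial.C f.leadingCoeff⁻¹ * f with hf₁
  have hlc : f.leadingCoeff ≠ 0 := Polynomial.leadingCoeff_ne_zero.2 hf0
  have hf₁m : f₁.Monic := by
    rw [hf₁, mul_comm]
    exact Polynomial.monic_mul_leadingCoeff_inv hf0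
  have hf₁d : f₁.natDegree = e' := by
    rw [hf₁, Polynomial.natDegree_C_mul (inv_ne_zero hlc), hfn]
  have hf₁e : ¬ Eventually w V e {f₁} := by
    intro h
    refine hfe ?_
    have := h.C_mul f.leadingCoeff
    rwa [hf₁, ← mul_assoc, ← Polynomial.C_mul, mul_inv_cancel₀ hlc, Polynomial.C_1, one_mul] at this
  have hee' : e < e' := by
    by_contra! h
    rcases h.lt_or_eq with h | h
    · exact hf₁e (Eventually.of_natDegree_lt (hf₁d ▸ h))
    · exact hf₁e (Eventually.of_monic hV himm hf₁m he (hf₁d.trans h)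
        (h0 f₁ hf₁m.ne_zero (hf₁d ▸ he'd)))
  refine ⟨e', hee', he'd, f₁, hf₁m, hf₁d, fun f₂ hf₂m hf₂d hle G hG hGd => ?_⟩
  have hf₂e : ¬ Eventually w V e {f₂} := by
    intro h
    refine hf₁e ?_
    have hadd : f₂ + (f₁ - f₂) = f₁ := by ring
    have := h.add hV (hmin (f₁ - f₂) (natDegree_sub_lt_of_monic hf₁m hf₂m (he.trans hee')
      hf₁d hf₂d)) (by rwa [hadd]) (by rw [hadd]; exact V.map_sub_le le_rfl hle)
    rwa [hadd] at this
  obtain ⟨Q, S, c, F, g, hQ, hres, hc, hg, hgle, hsmall, hfF, hlt⟩ :=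
    exists_reduction_of_not_eventually hV himm he hL hf₂m.ne_zero hf₂e hG
      fun u hu => hmin u (hGd u hu)
  obtain ⟨b, hb, hbf⟩ := exists_valuation_eq hV himm (h0 f₂ hf₂m.ne_zero (hf₂d ▸ he'd))
  obtain ⟨S', hS'⟩ := S.exists_succ hV (by rw [hQ, hf₂d]; exact hee') hc hg hgle hsmall hfF hlt
    hb hbf
  exact ⟨S', fun u hu => hS' u (hres u hu)⟩

lemma exists_level_forall_eventually {P : Polynomial K} {d : ℕ} (hP : P.Monic)
    (hPd : P.natDegree = d) (hP0 : V P = 0) (h0 : ∀ g, g ≠ 0 → g.natDegree < d → V g ≠ 0)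
    (hd : 1 < d) : ∃ e, 0 < e ∧ Exists w V e ∧
      ∀ g : Polynomial K, g.natDegree < d → Eventually w V e {g} := by
  have key : ∀ n e, d - e = n → 0 < e → e < d → Exists w V e → ∃ e, 0 < e ∧ Exists w V e ∧
      ∀ g : Polynomial K, g.natDegree < d → Eventually w V e {g} := by
    intro n
    induction n using Nat.strong_induction_on with
    | _ n ih =>
      intro e hn he hed hL
      rcases exists_level_or_not_eventually hV himm hP hPd hP0 h0 he hL with
        ⟨e', hee', he'd, hL'⟩ | h
      · exact ih (d - e') (by omega) e' rfl (by omega) he'd hL'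
      · exact ⟨e, he, hL, h⟩
  exact key _ 1 rfl one_pos hd
    (exists_one hV himm fun g hg hgd => h0 g hg (hgd.trans_lt hd))

end LevelSystem

open LevelSystem in
/-- The case of a simple algebraic extension. -/
theorem HasMonicPresentations.of_adjoin_eq_top {M : Type*} [Field M] [Algebra K M]
    {w : Valuation K Γ₀} {v : Valuation M Γ₀} (hvw : ∀ a, v (algebraMap K M a) = w a)
    (himm : ∀ z : M, z ≠ 0 → ∃ a : K, v (z - algebraMap K M a) < v z) {x : M}
    (hx : IsIntegral K x) (hsurj : Function.Surjective (Polynomial.aeval (R := K) x)) :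
    HasMonicPresentations w v := by
  have hmod (m : M) : ∃ g : Polynomial K, g.natDegree < (minpoly K x).natDegree ∧
      Polynomial.aeval x g = m := by
    obtain ⟨p, rfl⟩ := hsurj m
    refine ⟨p %ₘ minpoly K x, Polynomial.natDegree_modByMonic_lt p (minpoly.monic hx)
      (minpoly.ne_one K x), ?_⟩
    conv_rhs => rw [← Polynomial.modByMonic_add_div p (minpoly K x)]
    rw [map_add, map_mul, minpoly.aeval, zero_mul, add_zero]
  rcases (Nat.succ_le_iff.2 (minpoly.natDegree_pos hx)).eq_or_lt with hd | hd
  · refine of_surjective hvw fun m => ?_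
    obtain ⟨g, hg, rfl⟩ := hmod m
    rw [← hd] at hg
    rw [Polynomial.eq_C_of_natDegree_eq_zero (Nat.lt_one_iff.1 hg), Polynomial.aeval_C]
    exact ⟨_, rfl⟩
  set V : Valuation (Polynomial K) Γ₀ := v.comap (Polynomial.aeval (R := K) x).toRingHom
  have hVapp (g : Polynomial K) : V g = v (Polynomial.aeval x g) := rfl
  have hV (a : K) : V (algebraMap K (Polynomial K) a) = w a := by
    rw [hVapp, Polynomial.algebraMap_eq, Polynomial.aeval_C, hvw]
  have himmV (g : Polynomial K) (hg : V g ≠ 0) : ∃ a : K, V (g - Polynomial.C a) < V g := by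
    obtain ⟨a, ha⟩ := himm _ (v.ne_zero_iff.1 hg)
    exact ⟨a, by rwa [hVapp, hVapp, map_sub, Polynomial.aeval_C]⟩
  have hP0 : V (minpoly K x) = 0 := by rw [hVapp, minpoly.aeval, map_zero]
  have h0 (g : Polynomial K) (hg : g ≠ 0) (hgd : g.natDegree < (minpoly K x).natDegree) :
      V g ≠ 0 := by
    intro h
    rw [hVapp, map_eq_zero] at h
    exact absurd (Polynomial.natDegree_le_of_dvd (minpoly.dvd K x h) hg) (not_le.2 hgd)
  obtain ⟨e, he, hL, hEv⟩ :=
    exists_level_forall_eventually hV himmV (minpoly.monic hx) rfl hP0 h0 hd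
  intro E hE
  choose r hrd hr using hmod
  obtain ⟨Q, S, c, F, g, -, hres, hc, hg, hgle, hsmall, hfF, -⟩ :=
    exists_reduction_of_not_eventually hV himmV he hL (minpoly.ne_zero hx)
      (not_eventually_of_valuation_eq_zero hV hL (minpoly.ne_zero hx) hP0) (hE.image r) (by
        rintro _ ⟨m, _, rfl⟩
        exact hEv _ (hrd m))
  have := S.finite
  have hcomp : aeval (R := K) (fun o => Polynomial.aeval x (S.pt o)) =
      (Polynomial.aeval (R := K) x).comp (aeval S.pt) :=
    MvPolynomial.algHom_ext fun o => by simp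
  refine ⟨⟨Option S.ι, inferInstance, fun o => Polynomial.aeval x (S.pt o), fun o => o.elim F S.F,
    fun o => o.elim g S.f, S.pt_le hV, ?_, ?_, ?_, ?_, ?_⟩, ?_⟩
  · rintro (_ | i)
    · exact hg
    · exact S.monic i
  · rintro (_ | i)
    · exact hgle
    · exact S.coeff_le i
  · rintro (_ | i)
    · exact hsmall
    · exact S.small i
  · rw [hcomp, Set.range_option_elim, Set.union_comm]
    have hker : RingHom.ker (aeval S.pt).toRingHom = Ideal.span (Set.range S.F) := S.ker_eq
    have hsu : Function.Surjective (aeval (R := K) S.pt).toRingHom := S.surj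
    refine RingHom.ker_comp_eq_span (s := {F}) (g := (Polynomial.aeval (R := K) x).toRingHom)
      hsu ?_ hker
    rw [Set.image_singleton]
    have hu : IsUnit (Polynomial.C c) := (isUnit_iff_ne_zero.2 hc).map Polynomial.C
    change _ = Ideal.span {aeval S.pt F}
    rw [← Ideal.span_singleton_mul_left_unit hu, ← hfF]
    exact minpoly.ker_aeval_eq_span_minpoly K x
  · rw [hcomp]
    exact hsurj.comp S.surj
  · intro m hm hvm
    obtain ⟨a, h, hs, ha⟩ := hres _ ⟨m, hm, rfl⟩
    have hwa : w a ≤ 1 := by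
      rw [← S.val_C_mul_one_add hV hs, ← ha, hVapp, hr]
      exact hvm
    refine ⟨C a * (1 + h), ?_, a, hwa, ?_⟩
    · have := DFunLike.congr_fun hcomp (C a * (1 + h))
      rw [AlgHom.comp_apply, aeval_C_mul, ← ha, hr] at this
      exact this
    · convert (IsIntegralFor.C hwa).mul_isSmallFor hs using 1
      ring

end SimpleExtensions

section FiniteExtensions

open MvPolynomial IntermediateField


variable {K K' Γ₀ : Type*} [Field K] [Field K'] [Algebra K K'] [Algebra.IsAlgebraic K K']
  [LinearOrderedCommGroupWithZero Γ₀]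

/-- In an algebraic extension in which every element is approximated by an element of the base
field, finitely generated subextensions have monic presentations. -/
theorem HasMonicPresentations.of_adjoin_finset {w : Valuation K Γ₀} {v : Valuation K' Γ₀}
    (hvw : ∀ a, v (algebraMap K K' a) = w a)
    (himm : ∀ z : K', z ≠ 0 → ∃ a : K, v (z - algebraMap K K' a) < v z) (S : Finset K') :
    HasMonicPresentations w
      (v.comap (algebraMap (IntermediateField.adjoin K (S : Set K')) K')) := by
  refine induction_on_adjoin_finset S
    (fun L => HasMonicPresentations w (v.comap (algebraMap L K'))) ?_ ?_
  · refine HasMonicPresentations.of_surjective (fun a => hvw a) ?_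
    rintro ⟨x, hx⟩
    obtain ⟨a, rfl⟩ := IntermediateField.mem_bot.1 hx
    exact ⟨a, rfl⟩
  · intro L x _ hL
    have hx : IsIntegral L x := (Algebra.IsAlgebraic.isAlgebraic (R := L) x).isIntegral
    have key : HasMonicPresentations (v.comap (algebraMap L K'))
        (v.comap (algebraMap L⟮x⟯ K')) := by
      refine HasMonicPresentations.of_adjoin_eq_top (x := AdjoinSimple.gen L x)
        (fun a => rfl) ?_ ((AdjoinSimple.isIntegral_gen L x).2 hx) ?_
      · intro z hz
        obtain ⟨a, ha⟩ := himm (algebraMap L⟮x⟯ K' z) (by simpa using hz)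
        exact ⟨algebraMap K L a, ha⟩
      · rintro ⟨z, hz⟩
        rw [← IntermediateField.mem_toSubalgebra,
          adjoin_simple_toSubalgebra_of_isAlgebraic hx.isAlgebraic,
          Algebra.adjoin_singleton_eq_range_aeval] at hz
        obtain ⟨p, rfl⟩ := hz
        refine ⟨p, Subtype.ext ?_⟩
        rw [← IntermediateField.algebraMap_apply, ← Polynomial.aeval_algebraMap_apply,
          AdjoinSimple.algebraMap_gen]
        rfl
    let _ : Algebra L (L⟮x⟯.restrictScalars K) := (inferInstance : Algebra L L⟮x⟯)
    have : IsScalarTower K L (L⟮x⟯.restrictScalars K) :=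
      IsScalarTower.of_algebraMap_eq fun _ => rfl
    exact HasMonicPresentations.trans (M := L) (L := L⟮x⟯.restrictScalars K)
      (fun a => hvw a) (fun a => rfl) hL key

end FiniteExtensions

section Descent

open MvPolynomial

/-- `MonicDeformation.exists_completeIntersection_subalgebra` for an arbitrary finite type of
variables. -/
theorem MonicDeformation.exists_completeIntersection_subalgebra_of_finite {V V' ι : Type*}
    [CommRing V] [IsDomain V] [ValuationRing V] [CommRing V'] [IsLocalRing V'] [Algebra V V']
    [Finite ι] {F : ι → MvPolynomial ι V} {f : ι → Polynomial V} {y : ι → V'}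
    (hf : ∀ i, (f i).Monic)
    (hF : ∀ i, F i - Polynomial.aeval (X i) (f i) ∈ (IsLocalRing.maximalIdeal V).map C)
    (hm : ∀ a ∈ IsLocalRing.maximalIdeal V, algebraMap V V' a ∈ IsLocalRing.maximalIdeal V')
    (hy : ∀ i, aeval y (F i) = 0)
    (hker : ∀ p, aeval y p = 0 → ∃ c : V, c ≠ 0 ∧ C c * p ∈ Ideal.span (Set.range F)) :
    ∃ B : Subalgebra V V', Algebra.IsCompleteIntersectionOfFiniteType V B ∧ ∀ i, y i ∈ B := by
  have e := Finite.equivFin ι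
  refine (exists_completeIntersection_subalgebra
    (F := fun k => rename e (F (e.symm k))) (f := f ∘ e.symm) (y := y ∘ e.symm)
    (fun k => hf _) (fun k => ?_) hm (fun k => ?_) (fun p hp => ?_)).imp
      fun B hB => ⟨hB.1, fun i => by simpa using hB.2 (e i)⟩
  · have h := Ideal.mem_map_of_mem (rename e : MvPolynomial ι V →ₐ[V] _) (hF (e.symm k))
    have hX : (rename e) (Polynomial.aeval (X (e.symm k) : MvPolynomial ι V) (f (e.symm k))) =
        Polynomial.aeval (X k) (f (e.symm k)) := by
      rw [← Polynomial.aeval_algHom_apply, rename_X, Equiv.apply_symm_apply]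
    rw [map_sub, hX] at h
    have hI : ((IsLocalRing.maximalIdeal V).map C).map
        (rename e : MvPolynomial ι V →ₐ[V] MvPolynomial (Fin (Nat.card ι)) V) =
          (IsLocalRing.maximalIdeal V).map C := by
      rw [← Ideal.map_coe (rename e : MvPolynomial ι V →ₐ[V] _), Ideal.map_map]
      congr 1
      ext a
      simp
    rwa [hI] at h
  · rw [aeval_rename, Function.comp_assoc, e.symm_comp_self, Function.comp_id]
    exact hy _
  · obtain ⟨c, hc, h⟩ := hker (rename e.symm p) (by rw [aeval_rename]; exact hp)
    refine ⟨c, hc, ?_⟩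
    have h := Ideal.mem_map_of_mem (rename e : MvPolynomial ι V →ₐ[V] _) h
    rw [map_mul, rename_C, rename_rename, e.self_comp_symm, rename_id_apply, Ideal.map_span,
      ← Set.range_comp, ← e.symm.surjective.range_comp] at h
    exact h

section Lifting

variable {A K : Type*} [CommRing A] [Field K] [Algebra A K]

lemma MvPolynomial.exists_map_algebraMap_eq {σ : Type*} {p : MvPolynomial σ K}
    (h : ∀ d, ∃ a, algebraMap A K a = coeff d p) : ∃ q, map (algebraMap A K) q = p := by
  refine mem_range_map_iff_coeffs_subset.2 fun c hc => ?_
  obtain ⟨d, -, rfl⟩ := mem_coeffs_iff.1 hc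
  exact h d

/-- Clearing denominators in an ideal membership. -/
lemma MvPolynomial.exists_C_mul_mem_span [IsDomain A] [IsFractionRing A K] {σ ι : Type*}
    {F : ι → MvPolynomial σ A} {p : MvPolynomial σ A}
    (h : map (algebraMap A K) p ∈ Ideal.span (Set.range fun i => map (algebraMap A K) (F i))) :
    ∃ c : A, c ≠ 0 ∧ C c * p ∈ Ideal.span (Set.range F) := by
  have hinj : Function.Injective (map (σ := σ) (algebraMap A K)) :=
    map_injective _ (IsFractionRing.injective A K)
  suffices H : ∀ P ∈ Ideal.span (Set.range fun i => map (algebraMap A K) (F i)),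
      ∃ c : A, c ≠ 0 ∧ ∃ q ∈ Ideal.span (Set.range F),
        C (algebraMap A K c) * P = map (algebraMap A K) q by
    obtain ⟨c, hc, q, hq, he⟩ := H _ h
    refine ⟨c, hc, ?_⟩
    rw [← map_C, ← map_mul] at he
    rwa [hinj he]
  have hden (r : MvPolynomial σ K) : ∃ c : A, c ≠ 0 ∧ ∃ q : MvPolynomial σ A,
      C (algebraMap A K c) * r = map (algebraMap A K) q := by
    induction r using MvPolynomial.induction_on with
    | C a =>
      obtain ⟨x, s, hs, rfl⟩ := IsFractionRing.div_surjective (A := A) a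
      have hs0 := nonZeroDivisors.ne_zero hs
      refine ⟨s, hs0, C x, ?_⟩
      rw [map_C, ← C_mul, mul_div_cancel₀]
      exact fun h0 => hs0 (IsFractionRing.injective A K (by rwa [map_zero]))
    | add p q hp hq =>
      obtain ⟨c, hc, p', hp⟩ := hp
      obtain ⟨d, hd, q', hq⟩ := hq
      refine ⟨c * d, mul_ne_zero hc hd, C d * p' + C c * q', ?_⟩
      simp only [map_mul, map_add, map_C, ← hp, ← hq]
      ring
    | mul_X p i hp =>
      obtain ⟨c, hc, p', hp⟩ := hp
      refine ⟨c, hc, p' * X i, ?_⟩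
      rw [map_mul, map_X, ← hp, mul_assoc]
  intro P hP
  induction hP using Submodule.span_induction with
  | mem P hP =>
    obtain ⟨i, rfl⟩ := hP
    exact ⟨1, one_ne_zero, F i, Ideal.subset_span ⟨i, rfl⟩, by simp⟩
  | zero => exact ⟨1, one_ne_zero, 0, zero_mem _, by simp⟩
  | add p q _ _ hp hq =>
    obtain ⟨c, hc, p', hp', hp⟩ := hp
    obtain ⟨d, hd, q', hq', hq⟩ := hq
    refine ⟨c * d, mul_ne_zero hc hd, C d * p' + C c * q',
      add_mem (Ideal.mul_mem_left _ _ hp') (Ideal.mul_mem_left _ _ hq'), ?_⟩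
    simp only [map_mul, map_add, map_C, ← hp, ← hq]
    ring
  | smul r p _ hp =>
    obtain ⟨c, hc, p', hp', hp⟩ := hp
    obtain ⟨d, hd, r', hr⟩ := hden r
    refine ⟨c * d, mul_ne_zero hc hd, r' * p', Ideal.mul_mem_left _ _ hp', ?_⟩
    simp only [map_mul, smul_eq_mul, ← hp, ← hr]
    ring

end Lifting

end Descent

section Main

open MvPolynomial


variable {V V' K K' : Type*} [CommRing V] [IsDomain V] [ValuationRing V]
    [CommRing V'] [IsDomain V'] [ValuationRing V'] [Algebra V V']
    [Field K] [Algebra V K]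
    [Field K'] [Algebra V' K'] [IsFractionRing V' K']
    [Algebra V K'] [Algebra K K'] [IsScalarTower V V' K'] [IsScalarTower V K K']

lemma ValuationRing.valuation_integers (A F : Type*) [CommRing A] [IsDomain A] [ValuationRing A]
    [Field F] [Algebra A F] [IsFractionRing A F] : (valuation A F).Integers A where
  hom_inj := IsFractionRing.injective A F
  map_le_one a := (mem_integer_iff A F _).2 ⟨a, rfl⟩
  exists_of_le_one _ h := (mem_integer_iff A F _).1 h

lemma ValuationRing.valuation_algebraMap_lt_one_iff (A F : Type*) [CommRing A] [IsDomain A]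
    [ValuationRing A] [Field F] [Algebra A F] [IsFractionRing A F] {a : A} :
    valuation A F (algebraMap A F a) < 1 ↔ a ∈ IsLocalRing.maximalIdeal A := by
  rw [IsLocalRing.mem_maximalIdeal, mem_nonunits_iff,
    (valuation_integers A F).isUnit_iff_valuation_eq_one]
  exact ((valuation_integers A F).map_le_one a).lt_iff_ne

namespace IsImmediateExtension

variable (himm : IsImmediateExtension V V')
include himm

variable (K K') in
lemma valuation_algebraMap_lt_one_iff {a : V} :
    ValuationRing.valuation V' K' (algebraMap K K' (algebraMap V K a)) < 1 ↔
      a ∈ IsLocalRing.maximalIdeal V := by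
  rw [← IsScalarTower.algebraMap_apply, IsScalarTower.algebraMap_apply V V' K',
    ValuationRing.valuation_algebraMap_lt_one_iff, himm.2.1]

lemma exists_of_valuation_le_one [IsFractionRing V K] {a : K}
    (ha : ValuationRing.valuation V' K' (algebraMap K K' a) ≤ 1) :
    ∃ b, algebraMap V K b = a := by
  rcases ValuationRing.isInteger_or_isInteger V a with ⟨b, hb⟩ | ⟨b, hb⟩
  · exact ⟨b, hb⟩
  · rcases eq_or_ne a 0 with rfl | h0
    · exact ⟨0, map_zero _⟩
    have hu : IsUnit b := by
      by_contra hu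
      have h := (himm.valuation_algebraMap_lt_one_iff K K').2
        ((IsLocalRing.mem_maximalIdeal b).2 hu)
      rw [hb, map_inv₀, map_inv₀] at h
      have h1 : ValuationRing.valuation V' K' (algebraMap K K' a) ≠ 0 := by simpa using h0
      exact absurd ha (not_le.2 ((inv_lt_one₀ (zero_lt_iff.2 h1)).1 h))
    obtain ⟨u, rfl⟩ := hu
    refine ⟨(u⁻¹ : Vˣ), ?_⟩
    rw [← inv_inj, ← hb, ← map_units_inv, inv_inv]

lemma exists_valuation_eq {z : K'} (hz : z ≠ 0) :
    ∃ a : K, ValuationRing.valuation V' K' (algebraMap K K' a) =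
      ValuationRing.valuation V' K' z := by
  have key (x : V') (hx : x ≠ 0) : ∃ a : K, ValuationRing.valuation V' K' (algebraMap K K' a) =
      ValuationRing.valuation V' K' (algebraMap V' K' x) := by
    obtain ⟨a, b, -, hb, u, hu⟩ := himm.2.2.2 x hx
    refine ⟨algebraMap V K a / algebraMap V K b, ?_⟩
    have hu1 : ValuationRing.valuation V' K' (algebraMap V' K' u) = 1 :=
      (ValuationRing.valuation_integers V' K').isUnit_iff_valuation_eq_one.1 u.isUnit
    have hb0 : algebraMap V' K' (algebraMap V V' b) ≠ 0 := by
      rw [Ne, map_eq_zero_iff _ (IsFractionRing.injective V' K'), map_eq_zero_iff _ himm.1]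
      exact hb
    have h := congrArg (fun t => ValuationRing.valuation V' K' (algebraMap V' K' t)) hu
    simp only [map_mul, hu1, mul_one] at h
    rw [map_div₀, map_div₀, ← IsScalarTower.algebraMap_apply, ← IsScalarTower.algebraMap_apply,
      IsScalarTower.algebraMap_apply V V' K', IsScalarTower.algebraMap_apply V V' K', h,
      mul_div_cancel_right₀]
    simpa using hb0
  obtain ⟨x, s, hs, rfl⟩ := IsFractionRing.div_surjective (A := V') z
  obtain ⟨a, ha⟩ := key x (by rintro rfl; simp at hz)
  obtain ⟨b, hb⟩ := key s (nonZeroDivisors.ne_zero hs)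
  exact ⟨a / b, by rw [map_div₀, map_div₀, ha, hb, map_div₀]⟩

lemma exists_valuation_sub_lt {z : K'} (hz : z ≠ 0) :
    ∃ a : K, ValuationRing.valuation V' K' (z - algebraMap K K' a) <
      ValuationRing.valuation V' K' z := by
  obtain ⟨a, ha⟩ := himm.exists_valuation_eq (K := K) hz
  have hz0 : ValuationRing.valuation V' K' z ≠ 0 := by simpa using hz
  have ha0 : algebraMap K K' a ≠ 0 := by
    intro h
    rw [h, map_zero] at ha
    exact hz0 ha.symm
  obtain ⟨c, hc⟩ := (ValuationRing.valuation_integers V' K').exists_of_le_one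
    (r := z / algebraMap K K' a) (by rw [map_div₀, ha, div_self hz0])
  obtain ⟨b, hb⟩ := himm.2.2.1 c
  rw [← ValuationRing.valuation_algebraMap_lt_one_iff V' K', map_sub, hc,
    ← IsScalarTower.algebraMap_apply, IsScalarTower.algebraMap_apply V K K'] at hb
  refine ⟨algebraMap V K b * a, ?_⟩
  have h : z - algebraMap K K' (algebraMap V K b * a) =
      (z / algebraMap K K' a - algebraMap K K' (algebraMap V K b)) * algebraMap K K' a := by
    rw [sub_mul, div_mul_cancel₀ _ ha0, map_mul]
  rw [h, map_mul, ha]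
  exact mul_lt_of_lt_one_left (zero_lt_iff.2 hz0) hb

/-- Any finite set of elements of `V'` is contained in a complete intersection subalgebra. -/
theorem exists_completeIntersection_subalgebra [IsFractionRing V K]
    [Algebra.IsAlgebraic K K'] (E : Finset V') :
    ∃ B : Subalgebra V V', Algebra.IsCompleteIntersectionOfFiniteType V B ∧ ∀ e ∈ E, e ∈ B := by
  classical
  set v := ValuationRing.valuation V' K' with hv
  set w := v.comap (algebraMap K K') with hw
  let E' : Finset K' := E.image (algebraMap V' K')
  set L := IntermediateField.adjoin K (E' : Set K') with hL
  obtain ⟨S, hS⟩ := HasMonicPresentations.of_adjoin_finset (w := w) (v := v) (fun _ => rfl)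
    (fun z hz => himm.exists_valuation_sub_lt hz) E' ((↑) ⁻¹' (E' : Set K'))
    (E'.finite_toSet.preimage Subtype.val_injective.injOn)
  have := S.finite
  have hintegers := ValuationRing.valuation_integers V' K'
  have hlift {p : MvPolynomial S.ι K} (hp : IsIntegralFor w p) :
      ∃ q, map (algebraMap V K) q = p :=
    exists_map_algebraMap_eq fun d => himm.exists_of_valuation_le_one (K' := K') (hp d)
  choose y hy using fun i => hintegers.exists_of_le_one (S.y_le i)
  choose f hf hfm using fun i => (show ∃ g : Polynomial V,
      g.map (algebraMap V K) = S.f i ∧ g.Monic from by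
    obtain ⟨g, hg, -, hgm⟩ := Polynomial.lifts_and_natDegree_eq_and_monic
      ((Polynomial.lifts_iff_coeff_lifts _).2 fun k =>
        himm.exists_of_valuation_le_one (K' := K') (S.coeff_le i k)) (S.monic i)
    exact ⟨g, hg, hgm⟩)
  have hfX (i) : map (algebraMap V K) (Polynomial.aeval (X i) (f i)) =
      Polynomial.aeval (X i) (S.f i) := by
    rw [MonicDeformation.map_aeval_X, hf]
  choose F hF using fun i => hlift (IsIntegralFor.of_isSmallFor_sub (S.small i) (fun d => by
    rw [← hfX, coeff_map]
    change v _ ≤ 1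
    rw [← IsScalarTower.algebraMap_apply, IsScalarTower.algebraMap_apply V V' K']
    exact hintegers.map_le_one _))
  have haeval (p : MvPolynomial S.ι V) : algebraMap V' K' (aeval y p) =
      algebraMap L K' (aeval S.y (map (algebraMap V K) p)) := by
    rw [← aeval_algebraMap_apply, ← aeval_algebraMap_apply, aeval_map_algebraMap]
    congr 2
    exact funext hy
  have hzero (p : MvPolynomial S.ι V) : aeval y p = 0 ↔
      map (algebraMap V K) p ∈ Ideal.span (Set.range S.F) := by
    rw [← S.ker_eq, RingHom.mem_ker, ← map_eq_zero_iff _ (IsFractionRing.injective V' K'), haeval,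
      map_eq_zero_iff _ (algebraMap L K').injective]
    rfl
  obtain ⟨B, hB, hyB⟩ := MonicDeformation.exists_completeIntersection_subalgebra_of_finite
    (F := F) (f := f) (y := y) hfm (fun i => mem_map_C_iff.2 fun d =>
      (himm.valuation_algebraMap_lt_one_iff K K').1 (by
        rw [← coeff_map, map_sub, hF, hfX]
        exact S.small i d))
    (fun a ha => (himm.2.1 a).2 ha)
    (fun i => (hzero _).2 (by rw [hF]; exact Ideal.subset_span ⟨i, rfl⟩))
    (fun p hp => exists_C_mul_mem_span (K := K) (by simpa only [hF] using (hzero p).1 hp))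
  refine ⟨B, hB, fun e he => ?_⟩
  have heE : algebraMap V' K' e ∈ E' := Finset.mem_image_of_mem _ he
  obtain ⟨p, hp, a, ha, hpa⟩ := hS ⟨algebraMap V' K' e, IntermediateField.subset_adjoin _ _ heE⟩
    heE (hintegers.map_le_one e)
  obtain ⟨q, rfl⟩ := hlift (IsIntegralFor.of_isSmallFor_sub hpa (IsIntegralFor.C ha))
  have hq : aeval y q = e := IsFractionRing.injective V' K' (by rw [haeval, hp]; rfl)
  rw [← hq]
  exact (Algebra.adjoin_le (by rintro _ ⟨i, rfl⟩; exact hyB i) :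
    Algebra.adjoin V (Set.range y) ≤ B)
      (by rw [Algebra.adjoin_range_eq_range_aeval]; exact ⟨q, rfl⟩)

end IsImmediateExtension

lemma Algebra.IsCompleteIntersectionOfFiniteType.finiteType {R A : Type*} [CommRing R] [CommRing A]
    [Algebra R A] (h : Algebra.IsCompleteIntersectionOfFiniteType R A) :
    Algebra.FiniteType R A := by
  obtain ⟨N, r, f, -, ⟨e⟩⟩ := h
  exact Algebra.FiniteType.equiv inferInstance e

end Main

/-- Let `V ⊆ V'` be an immediate extension of valuation rings with fraction field
extension `K ⊆ K'`.  If `K'/K` is algebraic then `V'` is a filtered union of its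
`V`-subalgebras which are complete intersection `V`-algebras of finite type. -/
theorem immediate_extension_filtered_union_complete_intersection_of_algebraic
    (V V' K K' : Type u) [CommRing V] [IsDomain V] [ValuationRing V]
    [CommRing V'] [IsDomain V'] [ValuationRing V'] [Algebra V V']
    [Field K] [Algebra V K] [IsFractionRing V K]
    [Field K'] [Algebra V' K'] [IsFractionRing V' K']
    [Algebra V K'] [Algebra K K'] [IsScalarTower V V' K'] [IsScalarTower V K K']
    (himm : IsImmediateExtension V V')
    (halg : Algebra.IsAlgebraic K K') :
    Subalgebra.IsFilteredUnion (fun B : Subalgebra V V' =>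
      Algebra.IsCompleteIntersectionOfFiniteType V B) := by
  classical
  have key := himm.exists_completeIntersection_subalgebra (K := K) (K' := K')
  refine ⟨(key ∅).imp fun _ h => h.1, ?_,
    fun s => (key {s}).imp fun _ h => ⟨h.1, by simpa using h.2⟩⟩
  intro A hA B hB
  obtain ⟨s, rfl⟩ := (Subalgebra.fg_iff_finiteType A).2 hA.finiteType
  obtain ⟨t, rfl⟩ := (Subalgebra.fg_iff_finiteType B).2 hB.finiteType
  obtain ⟨D, hD, hst⟩ := key (s ∪ t)
  exact ⟨D, hD, Algebra.adjoin_le fun e he => hst e (Finset.mem_union_left t he),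
    Algebra.adjoin_le fun e he => hst e (Finset.mem_union_right s he)⟩
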